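/- arXiv:2009.09375 — 2 statements merged into one kernel-verified Lean document; each statement's English description precedes it below -/
import Mathlib

section
/- Let χ be a complex character of G with χ ≠ 1_G and χ|_K = 1_K, and define the linear map Θ_χ : ℂP̃₀ → ℂP̃₁ by Θ_χ y = e_χ(y ∨ u) for y ∈ P̃₀. Then there is a unique H_χ ∈ P̃_{a,b−1,0} such that for every y ∈ P̃₀ one has Θ_χ y ≠ 0 if and only if y ⊆ H_χ. Moreover, Θ_χ restricts to a linear bijection from ℂP(x,H_χ) onto M(χ), and, with L₁, L₂, R₁, R₂, E*_{i,j} the matrices attached to P(x,H_χ) with respect to x, the following hold on ℂP(x,H_χ) for all 0 ≤ i ≤ a and 0 ≤ j ≤ b−1: L̃₁Θ_χ = qΘ_χL₁; L̃₂Θ_χ = qΘ_χL₂; L̃₃Θ_χ = 0; R̃₁Θ_χ = Θ_χR₁; R̃₂Θ_χ = Θ_χR₂; R̃₃Θ_χ = 0; Ẽ*_{i,j,0}Θ_χ = Ẽ*_{i,b,0}Θ_χ = Ẽ*_{i,b,1}Θ_χ = 0; Ẽ*_{i,j,1}Θ_χ = Θ_χE*_{i,j}. -/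
open Module

/-- The q-Pochhammer symbol `(q;q)_n = ∏_{ℓ=0}^{n-1} (1 - q^ℓ)`. -/
noncomputable def qPoch (q : ℂ) (n : ℕ) : ℂ := ∏ l ∈ Finset.range n, (1 - q ^ l)

/-- The q-Pochhammer symbol with an integer index (junk value for negative index). -/
noncomputable def qPochZ (q : ℂ) (n : ℤ) : ℂ := qPoch q n.toNat

/-- The Gaussian binomial coefficient `[m, n]_q`, with the convention that it
vanishes unless `0 ≤ n ≤ m`. -/
noncomputable def qGauss (q : ℂ) (m n : ℤ) : ℂ :=
  if 0 ≤ n ∧ n ≤ m then qPoch q m.toNat / (qPoch q n.toNat * qPoch q (m - n).toNat) else 0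

section Twisted

variable (F : Type) [Field F] [Fintype F] (n : ℕ)

/-- Membership of `y` in `P̃_{i,j,k}` (with respect to `x ⊆ H`). -/
def PtMem (x H : Submodule F (Fin n → F)) (i j k : ℤ) (y : Submodule F (Fin n → F)) : Prop :=
  (finrank F ↥(x ⊓ y) : ℤ) = i ∧ (finrank F ↥(H ⊓ y) : ℤ) = i + j ∧
    (finrank F y : ℤ) = i + j + k

open Classical in
/-- The diagonal matrix `Ẽ*_{i,j,k}`. -/
noncomputable def EstarT (x H : Submodule F (Fin n → F)) (i j k : ℤ) :
    Matrix (Submodule F (Fin n → F)) (Submodule F (Fin n → F)) ℂ :=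
  Matrix.diagonal fun y => if PtMem F n x H i j k y then 1 else 0

open Classical in
/-- The lowering matrix `L̃₁`. -/
noncomputable def LoneT (x H : Submodule F (Fin n → F)) :
    Matrix (Submodule F (Fin n → F)) (Submodule F (Fin n → F)) ℂ :=
  fun y z => if y ≤ z ∧ finrank F y + 1 = finrank F z ∧
    finrank F ↥(x ⊓ y) + 1 = finrank F ↥(x ⊓ z) ∧
    finrank F ↥(H ⊓ y) + 1 = finrank F ↥(H ⊓ z) then 1 else 0

open Classical in
/-- The lowering matrix `L̃₂`. -/
noncomputable def LtwoT (x H : Submodule F (Fin n → F)) :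
    Matrix (Submodule F (Fin n → F)) (Submodule F (Fin n → F)) ℂ :=
  fun y z => if y ≤ z ∧ finrank F y + 1 = finrank F z ∧
    finrank F ↥(x ⊓ y) = finrank F ↥(x ⊓ z) ∧
    finrank F ↥(H ⊓ y) + 1 = finrank F ↥(H ⊓ z) then 1 else 0

open Classical in
/-- The lowering matrix `L̃₃`. -/
noncomputable def LthreeT (x H : Submodule F (Fin n → F)) :
    Matrix (Submodule F (Fin n → F)) (Submodule F (Fin n → F)) ℂ :=
  fun y z => if y ≤ z ∧ finrank F y + 1 = finrank F z ∧
    finrank F ↥(x ⊓ y) = finrank F ↥(x ⊓ z) ∧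
    finrank F ↥(H ⊓ y) = finrank F ↥(H ⊓ z) then 1 else 0

open Classical in
/-- The raising matrix `R̃₁`. -/
noncomputable def RoneT (x H : Submodule F (Fin n → F)) :
    Matrix (Submodule F (Fin n → F)) (Submodule F (Fin n → F)) ℂ :=
  fun y z => if z ≤ y ∧ finrank F z + 1 = finrank F y ∧
    finrank F ↥(x ⊓ z) + 1 = finrank F ↥(x ⊓ y) ∧
    finrank F ↥(H ⊓ z) + 1 = finrank F ↥(H ⊓ y) then 1 else 0

open Classical in
/-- The raising matrix `R̃₂`. -/
noncomputable def RtwoT (x H : Submodule F (Fin n → F)) :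
    Matrix (Submodule F (Fin n → F)) (Submodule F (Fin n → F)) ℂ :=
  fun y z => if z ≤ y ∧ finrank F z + 1 = finrank F y ∧
    finrank F ↥(x ⊓ z) = finrank F ↥(x ⊓ y) ∧
    finrank F ↥(H ⊓ z) + 1 = finrank F ↥(H ⊓ y) then 1 else 0

open Classical in
/-- The raising matrix `R̃₃`. -/
noncomputable def RthreeT (x H : Submodule F (Fin n → F)) :
    Matrix (Submodule F (Fin n → F)) (Submodule F (Fin n → F)) ℂ :=
  fun y z => if z ≤ y ∧ finrank F z + 1 = finrank F y ∧
    finrank F ↥(x ⊓ z) = finrank F ↥(x ⊓ y) ∧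
    finrank F ↥(H ⊓ z) = finrank F ↥(H ⊓ y) then 1 else 0

open Classical in
/-- The diagonal matrix `E*_{i,j}` of `P(x', H')`, viewed inside `Mat_{P̃}(ℂ)`
(supported on the subspaces of `H'`). -/
noncomputable def EstarRel (x' H' : Submodule F (Fin n → F)) (i j : ℤ) :
    Matrix (Submodule F (Fin n → F)) (Submodule F (Fin n → F)) ℂ :=
  Matrix.diagonal fun y => if y ≤ H' ∧ (finrank F ↥(x' ⊓ y) : ℤ) = i ∧
    (finrank F y : ℤ) = i + j then 1 else 0

open Classical in
/-- The lowering matrix `L₁` of `P(x', H')`, viewed inside `Mat_{P̃}(ℂ)`. -/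
noncomputable def LoneRel (x' H' : Submodule F (Fin n → F)) :
    Matrix (Submodule F (Fin n → F)) (Submodule F (Fin n → F)) ℂ :=
  fun y z => if z ≤ H' ∧ y ≤ z ∧ finrank F y + 1 = finrank F z ∧
    finrank F ↥(x' ⊓ y) + 1 = finrank F ↥(x' ⊓ z) then 1 else 0

open Classical in
/-- The lowering matrix `L₂` of `P(x', H')`, viewed inside `Mat_{P̃}(ℂ)`. -/
noncomputable def LtwoRel (x' H' : Submodule F (Fin n → F)) :
    Matrix (Submodule F (Fin n → F)) (Submodule F (Fin n → F)) ℂ :=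
  fun y z => if z ≤ H' ∧ y ≤ z ∧ finrank F y + 1 = finrank F z ∧
    finrank F ↥(x' ⊓ y) = finrank F ↥(x' ⊓ z) then 1 else 0

open Classical in
/-- The raising matrix `R₁` of `P(x', H')`, viewed inside `Mat_{P̃}(ℂ)`. -/
noncomputable def RoneRel (x' H' : Submodule F (Fin n → F)) :
    Matrix (Submodule F (Fin n → F)) (Submodule F (Fin n → F)) ℂ :=
  fun y z => if y ≤ H' ∧ z ≤ y ∧ finrank F z + 1 = finrank F y ∧
    finrank F ↥(x' ⊓ z) + 1 = finrank F ↥(x' ⊓ y) then 1 else 0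

open Classical in
/-- The raising matrix `R₂` of `P(x', H')`, viewed inside `Mat_{P̃}(ℂ)`. -/
noncomputable def RtwoRel (x' H' : Submodule F (Fin n → F)) :
    Matrix (Submodule F (Fin n → F)) (Submodule F (Fin n → F)) ℂ :=
  fun y z => if y ≤ H' ∧ z ≤ y ∧ finrank F z + 1 = finrank F y ∧
    finrank F ↥(x' ⊓ z) = finrank F ↥(x' ⊓ y) then 1 else 0

end Twisted

section GroupPart

variable (F : Type) [Field F] [Fintype F] (n : ℕ)

/-- The subgroup `G` of `SL(Ṽ)` consisting of the elements fixing every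
vector of the hyperplane `H`. -/
noncomputable def Gsub (H : Submodule F (Fin n → F)) :
    Subgroup ((Fin n → F) ≃ₗ[F] (Fin n → F)) where
  carrier := {g | LinearEquiv.det g = 1 ∧ ∀ v ∈ H, g v = v}
  one_mem' := ⟨map_one _, fun v _ => rfl⟩
  mul_mem' := by
    rintro g h ⟨hg1, hg2⟩ ⟨hh1, hh2⟩
    refine ⟨by rw [map_mul, hg1, hh1, one_mul], fun v hv => ?_⟩
    show g (h v) = v
    rw [hh2 v hv, hg2 v hv]
  inv_mem' := by
    rintro g ⟨hg1, hg2⟩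
    refine ⟨by rw [map_inv, hg1, inv_one], fun v hv => ?_⟩
    show g.symm v = v
    conv_lhs => rw [← hg2 v hv]
    exact g.symm_apply_apply v

/-- The image of a subspace under a linear automorphism. -/
noncomputable def smap (g : (Fin n → F) ≃ₗ[F] (Fin n → F))
    (y : Submodule F (Fin n → F)) : Submodule F (Fin n → F) :=
  Submodule.map (g : (Fin n → F) →ₗ[F] (Fin n → F)) y

/-- The `χ`-homogeneous component of the span of the basis vectors indexed by `S`. -/
noncomputable def Mcomp (H : Submodule F (Fin n → F)) (χ : Gsub F n H →* ℂ)
    (S : Set (Submodule F (Fin n → F))) : Submodule ℂ (Submodule F (Fin n → F) → ℂ) where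
  carrier := {v | (∀ y, y ∉ S → v y = 0) ∧
      ∀ g : Gsub F n H, ∀ y : Submodule F (Fin n → F),
        v (smap F n ((g⁻¹ : Gsub F n H) : (Fin n → F) ≃ₗ[F] (Fin n → F)) y) = χ g * v y}
  zero_mem' := ⟨fun _ _ => rfl, fun g y => by simp⟩
  add_mem' := by
    rintro v w ⟨hv1, hv2⟩ ⟨hw1, hw2⟩
    refine ⟨fun y hy => by simp [hv1 y hy, hw1 y hy], fun g y => ?_⟩
    simp only [Pi.add_apply, hv2 g y, hw2 g y]
    ring
  smul_mem' := by
    rintro c v ⟨hv1, hv2⟩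
    refine ⟨fun y hy => by simp [hv1 y hy], fun g y => ?_⟩
    simp only [Pi.smul_apply, hv2 g y, smul_eq_mul]
    ring

open Classical in
/-- The characteristic vector (as a function) of a single subspace `y`. -/
noncomputable def delta (y z : Submodule F (Fin n → F)) : ℂ :=
  if z = y then 1 else 0

open Classical in
/-- The idempotent `e_χ = q^{-(a+b)} Σ_{g ∈ G} χ(g⁻¹) g` applied to a vector of `ℂP̃`. -/
noncomputable def echi (H : Submodule F (Fin n → F)) [Fintype (Gsub F n H)]
    (χ : Gsub F n H →* ℂ) (v : Submodule F (Fin n → F) → ℂ) :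
    Submodule F (Fin n → F) → ℂ := fun y =>
  ((Fintype.card F : ℂ) ^ (n - 1))⁻¹ *
    ∑ g : Gsub F n H, χ g⁻¹ *
      v (smap F n ((g⁻¹ : Gsub F n H) : (Fin n → F) ≃ₗ[F] (Fin n → F)) y)

open Classical in
/-- The linear map `Θ_χ : ℂP̃₀ → ℂP̃₁`, `Θ_χ y = e_χ(y ∨ u)`, as a matrix
(extended by zero on the basis vectors outside `ℂP̃₀`). -/
noncomputable def Theta (H : Submodule F (Fin n → F)) [Fintype (Gsub F n H)]
    (χ : Gsub F n H →* ℂ) (u : Submodule F (Fin n → F)) :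
    Matrix (Submodule F (Fin n → F)) (Submodule F (Fin n → F)) ℂ :=
  fun z y => if y ≤ H then echi F n H χ (delta F n (y ⊔ u)) z else 0

end GroupPart

/-- The condition `(g - id)(Ṽ) ⊆ x` defining the subgroup `K` of `G`. -/
def memK (F : Type) [Field F] [Fintype F] (n : ℕ) (x : Submodule F (Fin n → F))
    (g : (Fin n → F) ≃ₗ[F] (Fin n → F)) : Prop :=
  ∀ v : Fin n → F, g v - v ∈ x

/-
`G` is the group of transvections along `H`, hence isomorphic to the additive group of `H`, and
the kernel of `χ ≠ 1` contains a largest `F`-subspace `H_χ`, which is a hyperplane of `H`. Every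
`y ⊈ H` is `G`-conjugate to `(H ∩ y) ∨ u`, so a vector of `M(χ)` is determined by its values at
`y ∨ u` for `y ⊆ H`; the stabiliser of `y ∨ u` is `{g ∈ G | (g - id)(Ṽ) ⊆ y}`, which kills the
value unless `y ⊆ H_χ`. Counting this stabiliser gives
`(Θ_χ v)(y ∨ u) = q^{dim y - (a + b)} v(y)` for `y ⊆ H_χ`, whence the bijection. All the matrices
commute with `G` and so preserve `M(χ)`, and the identities reduce to comparing values at `y ∨ u`;
the factor `q` is the change of `q^{dim y}` along a lowering.
-/

section ModularLattice

variable {α : Type*} [Lattice α] [BoundedOrder α] [IsModularLattice α] {a b y z : α}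

theorem inf_sup_eq_of_isCompl (h : IsCompl a b) (hy : y ≤ a) : a ⊓ (y ⊔ b) = y := by
  rw [inf_comm, sup_inf_assoc_of_le b hy, h.symm.inf_eq_bot, sup_bot_eq]

theorem inf_sup_eq_of_isCompl_of_le (h : IsCompl a b) (hz : b ≤ z) : a ⊓ z ⊔ b = z := by
  rw [inf_comm, inf_sup_assoc_of_le a hz, h.sup_eq_top, inf_top_eq]

theorem eq_sup_iff_of_isCompl (h : IsCompl a b) (hy : y ≤ a) :
    z = y ⊔ b ↔ b ≤ z ∧ y = a ⊓ z := by
  constructor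
  · rintro rfl
    exact ⟨le_sup_right, (inf_sup_eq_of_isCompl h hy).symm⟩
  · rintro ⟨hz, rfl⟩
    exact (inf_sup_eq_of_isCompl_of_le h hz).symm

open Classical in
theorem sum_Ici_eq_sum_Iic_of_isCompl [Fintype α] {M : Type*} [AddCommMonoid M]
    (h : IsCompl a b) (φ : α → M) :
    (∑ z, if b ≤ z then φ z else 0) = ∑ y, if y ≤ a then φ (y ⊔ b) else 0 := by
  rw [← Finset.sum_filter, ← Finset.sum_filter]
  refine Finset.sum_nbij' (a ⊓ ·) (· ⊔ b) ?_ ?_ ?_ ?_ ?_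
  · exact fun z _ => by simp
  · exact fun y _ => by simp
  · exact fun z hz => inf_sup_eq_of_isCompl_of_le h (Finset.mem_filter.1 hz).2
  · exact fun y hy => inf_sup_eq_of_isCompl h (Finset.mem_filter.1 hy).2
  · exact fun z hz => by rw [inf_sup_eq_of_isCompl_of_le h (Finset.mem_filter.1 hz).2]

theorem le_of_inf_eq_inf_of_isCoatom (ha : IsCoatom a) (hyz : y < z)
    (h : a ⊓ y = a ⊓ z) : y ≤ a := by
  by_contra hy
  refine hyz.ne (eq_of_le_of_inf_le_of_sup_le (z := a) hyz.le ?_ ?_)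
  · rw [inf_comm, ← h, inf_comm]
  · rw [sup_comm y, (ha.not_le_iff_codisjoint.1 hy).eq_top]
    exact le_top

end ModularLattice

section LinearAlgebra

variable {K V : Type*} [Field K] [AddCommGroup V] [Module K V]

theorem exists_notMem_eq_span_singleton {H u : Submodule K V} (hHu : Disjoint H u)
    (hu : finrank K u = 1) : ∃ u₀ ∉ H, u = Submodule.span K {u₀} := by
  have hu0 : u ≠ ⊥ := by rintro rfl; simp at hu
  obtain ⟨u₀, hu₀u, hu₀⟩ := u.ne_bot_iff.1 hu0
  have : FiniteDimensional K u := .of_finrank_pos (by omega)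
  refine ⟨u₀, fun h => hu₀ (Submodule.disjoint_def.1 hHu u₀ h hu₀u), Eq.symm ?_⟩
  exact Submodule.eq_of_le_of_finrank_eq ((Submodule.span_singleton_le_iff_mem _ _).2 hu₀u)
    ((finrank_span_singleton hu₀).trans hu.symm)

theorem exists_dual_ker_eq [FiniteDimensional K V] {H : Submodule K V} {v : V}
    (hH : finrank K H + 1 = finrank K V) (hv : v ∉ H) :
    ∃ f : Dual K V, LinearMap.ker f = H ∧ f v = 1 := by
  obtain ⟨f, hfv, hHf⟩ := Submodule.exists_le_ker_of_notMem hv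
  have hf : f ≠ 0 := by rintro rfl; exact hfv rfl
  refine ⟨(f v)⁻¹ • f, ?_, by simp [hfv]⟩
  rw [LinearMap.ker_smul f _ (inv_ne_zero hfv)]
  exact (Submodule.eq_of_le_of_finrank_eq hHf
    (by linarith [Dual.finrank_ker_add_one_of_ne_zero hf])).symm

theorem isCoatom_ker_of_ne_zero {f : Dual K V} (hf : f ≠ 0) : IsCoatom (LinearMap.ker f) :=
  LinearMap.isCoatom_ker_of_surjective (LinearMap.surjective hf)

theorem isCompl_ker_span_singleton {f : Dual K V} {v : V} (hv : f v ≠ 0) :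
    IsCompl (LinearMap.ker f) (Submodule.span K {v}) :=
  Submodule.isCompl_span_singleton_of_isCoatom_of_notMem
    (isCoatom_ker_of_ne_zero (by rintro rfl; exact hv rfl)) hv

end LinearAlgebra

section AdditiveCharacters

variable {F M : Type*} [Field F] [Finite F] [AddCommGroup M] [Module F M]

theorem bijective_mulShift_of_ne_one {φ : AddChar F ℂ} (hφ : φ ≠ 1) :
    Function.Bijective φ.mulShift := by
  cases nonempty_fintype F
  rw [Fintype.bijective_iff_injective_and_card, AddChar.card_eq]
  exact ⟨AddChar.to_mulShift_inj_of_isPrimitive (.of_ne_one hφ), rfl⟩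

theorem exists_dual_addChar_eq {φ : AddChar F ℂ} (hφ : φ ≠ 1) (ψ : AddChar M ℂ) :
    ∃ l : Dual F M, ∀ m, ψ m = φ (l m) := by
  have hbij := bijective_mulShift_of_ne_one hφ
  have hex (m : M) : ∃ c : F, ∀ d, φ (c * d) = ψ (d • m) := by
    obtain ⟨c, hc⟩ := hbij.2 (ψ.compAddMonoidHom (LinearMap.toSpanSingleton F M m).toAddMonoidHom)
    exact ⟨c, fun d => DFunLike.congr_fun hc d⟩
  choose l hl using hex
  refine ⟨⟨⟨l, fun m m' => hbij.1 ?_⟩, fun c m => hbij.1 ?_⟩, fun m => ?_⟩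
  · ext d
    simp [add_mul, AddChar.map_add_eq_mul, hl]
  · ext d
    calc φ (l (c • m) * d) = ψ ((d * c) • m) := by rw [hl, smul_smul]
      _ = φ (c * l m * d) := by rw [← hl, mul_comm c, mul_assoc, mul_comm c]
  · simpa using (hl m 1).symm

theorem exists_submodule_le_iff_forall_addChar_eq_one [FiniteDimensional F M] {ψ : AddChar M ℂ}
    (hψ : ψ ≠ 1) : ∃ N : Submodule F M, finrank F N + 1 = finrank F M ∧
      ∀ y : Submodule F M, y ≤ N ↔ ∀ m ∈ y, ψ m = 1 := by
  obtain ⟨m₁, hm₁⟩ := AddChar.ne_one_iff.1 hψ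
  have hφ : ψ.compAddMonoidHom (LinearMap.toSpanSingleton F M m₁).toAddMonoidHom ≠ 1 :=
    AddChar.ne_one_iff.2 ⟨1, by simpa using hm₁⟩
  obtain ⟨l, hl⟩ := exists_dual_addChar_eq hφ ψ
  generalize ψ.compAddMonoidHom (LinearMap.toSpanSingleton F M m₁).toAddMonoidHom = φ at hφ hl
  have hl0 : l ≠ 0 := by rintro rfl; exact hm₁ (by simp [hl])
  refine ⟨LinearMap.ker l, Dual.finrank_ker_add_one_of_ne_zero hl0,
    fun y => ⟨fun hy m hm => by simp [hl, LinearMap.mem_ker.1 (hy hm)], fun hy m hm => ?_⟩⟩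
  refine (bijective_mulShift_of_ne_one hφ).1 (DFunLike.ext _ _ fun d => ?_)
  simpa [hl, mul_comm] using hy (d • m) (y.smul_mem d hm)

end AdditiveCharacters

section GroupAction

variable {F : Type} [Field F] {n : ℕ} {x y z H : Submodule F (Fin n → F)}

theorem smap_mul (e e' : (Fin n → F) ≃ₗ[F] (Fin n → F)) (z : Submodule F (Fin n → F)) :
    smap F n (e * e') z = smap F n e (smap F n e' z) :=
  Submodule.map_comp _ _ z

theorem smap_eq_orderIso (e : (Fin n → F) ≃ₗ[F] (Fin n → F)) :
    smap F n e = Submodule.orderIsoMapComap e :=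
  rfl

theorem finrank_smap (e : (Fin n → F) ≃ₗ[F] (Fin n → F)) (z : Submodule F (Fin n → F)) :
    finrank F (smap F n e z) = finrank F z :=
  e.finrank_map_eq z

theorem smap_eq_self_of_le (g : Gsub F n H) (hz : z ≤ H) : smap F n g.1 z = z := by
  refine Submodule.eq_of_le_of_finrank_eq ?_ (finrank_smap g.1 z)
  rintro _ ⟨w, hw, rfl⟩
  simpa [g.2.2 w (hz hw)] using hw

theorem inf_smap (g : Gsub F n H) (hx : x ≤ H) : x ⊓ smap F n g.1 z = x ⊓ z := by
  calc x ⊓ smap F n g.1 z = smap F n g.1 (x ⊓ z) := by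
        rw [smap_eq_orderIso, map_inf, ← smap_eq_orderIso, smap_eq_self_of_le g hx]
    _ = x ⊓ z := smap_eq_self_of_le g (inf_le_left.trans hx)

theorem finrank_inf_smap (g : Gsub F n H) (hx : x ≤ H) :
    finrank F ↥(x ⊓ smap F n g.1 z) = finrank F ↥(x ⊓ z) := by
  rw [inf_smap g hx]

theorem smap_eq_self_of_memK [Fintype F] {e : (Fin n → F) ≃ₗ[F] (Fin n → F)}
    (he : memK F n y e) (hyz : y ≤ z) : smap F n e z = z := by
  refine Submodule.eq_of_le_of_finrank_eq ?_ (finrank_smap e z)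
  rintro _ ⟨w, hw, rfl⟩
  simpa using z.add_mem (hyz (he w)) hw

end GroupAction

section Transvections

variable {F : Type} [Field F] {n : ℕ} {y z : Submodule F (Fin n → F)}
  {f : Dual F (Fin n → F)} {u₀ : Fin n → F}

theorem Gsub_apply_eq_add_smul (hu : f u₀ = 1) (g : Gsub F n (LinearMap.ker f)) (w : Fin n → F) :
    g.1 w = w + f w • (g.1 u₀ - u₀) := by
  have hfix : g.1 (w - f w • u₀) = w - f w • u₀ := g.2.2 _ (by simp [hu])
  rw [map_sub, map_smul] at hfix
  rw [smul_sub]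
  linear_combination (exp := 1) hfix

theorem Gsub_apply_sub_mem_ker (hu : f u₀ = 1) (g : Gsub F n (LinearMap.ker f)) :
    g.1 u₀ - u₀ ∈ LinearMap.ker f := by
  have htrans : (g.1 : (Fin n → F) →ₗ[F] (Fin n → F)) =
      LinearMap.transvection f (g.1 u₀ - u₀) :=
    LinearMap.ext (Gsub_apply_eq_add_smul hu g)
  have hdet : LinearMap.det (g.1 : (Fin n → F) →ₗ[F] (Fin n → F)) = 1 := by
    rw [← LinearEquiv.coe_det, g.2.1, Units.val_one]
  rw [htrans, LinearMap.transvection.det] at hdet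
  rw [LinearMap.mem_ker]
  linear_combination hdet

/-- The group `G` fixing `ker f` pointwise is the additive group of `ker f`, a vector `h` acting
as the transvection `w ↦ w + f w • h`. -/
noncomputable def kerMulEquivGsub (hu : f u₀ = 1) :
    Multiplicative (LinearMap.ker f) ≃* Gsub F n (LinearMap.ker f) where
  toFun h := ⟨LinearEquiv.transvection (LinearMap.mem_ker.1 h.toAdd.2),
    LinearEquiv.transvection.det_eq_one _,
    fun v hv => by
      rw [LinearEquiv.transvection.apply, LinearMap.mem_ker.1 hv, zero_smul, add_zero]⟩
  invFun g := .ofAdd ⟨g.1 u₀ - u₀, Gsub_apply_sub_mem_ker hu g⟩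
  left_inv h := by
    simp [LinearMap.transvection.apply, hu]
  right_inv g := by
    ext1
    ext1 w
    simp [LinearMap.transvection.apply, Gsub_apply_eq_add_smul hu g w]
  map_mul' h h' := by
    ext1
    ext1 w
    simp only [toAdd_mul, Submodule.coe_add, LinearEquiv.transvection.coe_apply,
      LinearMap.transvection.apply, smul_add, Subgroup.coe_mul, LinearEquiv.mul_apply, map_add,
      map_smul, LinearMap.map_coe_ker, zero_smul, add_zero]
    abel

theorem coe_kerMulEquivGsub_apply (hu : f u₀ = 1) (h : Multiplicative (LinearMap.ker f))
    (w : Fin n → F) : (kerMulEquivGsub hu h).1 w = w + f w • (h.toAdd : Fin n → F) :=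
  LinearEquiv.transvection.apply (LinearMap.mem_ker.1 h.toAdd.2) w

theorem memK_kerMulEquivGsub [Fintype F] (hu : f u₀ = 1)
    {h : Multiplicative (LinearMap.ker f)} :
    memK F n y (kerMulEquivGsub hu h).1 ↔ (h.toAdd : Fin n → F) ∈ y := by
  simp only [memK, coe_kerMulEquivGsub_apply, add_sub_cancel_left]
  exact ⟨fun hh => by simpa [hu] using hh u₀, fun hh v => y.smul_mem _ hh⟩

theorem natCard_memK [Fintype F] (hu : f u₀ = 1) (hy : y ≤ LinearMap.ker f) :
    Nat.card {g : Gsub F n (LinearMap.ker f) // memK F n y g.1} =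
      Fintype.card F ^ finrank F y := by
  have hsub : {h // memK F n y ((kerMulEquivGsub hu).toEquiv h).1} ≃ y :=
    (Equiv.subtypeEquivRight fun _ => memK_kerMulEquivGsub hu).trans
      (Submodule.comapSubtypeEquivOfLe hy).toEquiv
  rw [← Nat.card_congr ((kerMulEquivGsub hu).toEquiv.subtypeEquivOfSubtype),
    Nat.card_congr hsub, natCard_eq_pow_finrank (K := F), Nat.card_eq_fintype_card]

theorem exists_smap_eq_inf_sup (hu : f u₀ = 1) (hz : ¬ z ≤ LinearMap.ker f) :
    ∃ g : Gsub F n (LinearMap.ker f),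
      smap F n g.1 z = LinearMap.ker f ⊓ z ⊔ Submodule.span F {u₀} := by
  obtain ⟨v, hvz, hv⟩ := SetLike.not_le_iff_exists.1 hz
  have hv' : (f v)⁻¹ * f v = 1 := inv_mul_cancel₀ hv
  let g := kerMulEquivGsub hu (.ofAdd ⟨u₀ - (f v)⁻¹ • v, by simp [hu, hv']⟩)
  have hgv : g.1 ((f v)⁻¹ • v) = u₀ := by
    simp [g, coe_kerMulEquivGsub_apply, hv', -map_smul]
  have hle : Submodule.span F {u₀} ≤ smap F n g.1 z :=
    (Submodule.span_singleton_le_iff_mem _ _).2 ⟨_, z.smul_mem _ hvz, hgv⟩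
  refine ⟨g, ?_⟩
  rw [← inf_smap g le_rfl,
    inf_sup_eq_of_isCompl_of_le (isCompl_ker_span_singleton (by simp [hu])) hle]

theorem span_singleton_le_smap_sup_iff [Fintype F] (hu : f u₀ = 1) (hy : y ≤ LinearMap.ker f)
    (g : Gsub F n (LinearMap.ker f)) :
    Submodule.span F {u₀} ≤ smap F n g.1 (y ⊔ Submodule.span F {u₀}) ↔ memK F n y g.1 := by
  have hcompl : IsCompl (LinearMap.ker f) (Submodule.span F {u₀}) :=
    isCompl_ker_span_singleton (by simp [hu])
  refine ⟨fun hle => ?_, fun hg => (smap_eq_self_of_memK hg le_sup_left).symm ▸ le_sup_right⟩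
  have hfix : smap F n g.1 (y ⊔ Submodule.span F {u₀}) = y ⊔ Submodule.span F {u₀} := by
    rw [eq_sup_iff_of_isCompl hcompl hy, inf_smap g le_rfl, inf_sup_eq_of_isCompl hcompl hy]
    exact ⟨hle, rfl⟩
  have hu₀ : u₀ ∈ y ⊔ Submodule.span F {u₀} :=
    Submodule.mem_sup_right (Submodule.mem_span_singleton_self u₀)
  have hdiff : g.1 u₀ - u₀ ∈ LinearMap.ker f ⊓ (y ⊔ Submodule.span F {u₀}) :=
    ⟨Gsub_apply_sub_mem_ker hu g,
      Submodule.sub_mem _ (hfix.le (Submodule.mem_map_of_mem hu₀)) hu₀⟩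
  rw [inf_sup_eq_of_isCompl hcompl hy] at hdiff
  exact fun v => by simpa [Gsub_apply_eq_add_smul hu g v] using y.smul_mem (f v) hdiff

end Transvections

section CharacterKernel

variable {F : Type} [Field F] [Fintype F] {n : ℕ}

/-- `N` is the largest subspace of `H` such that `χ` is trivial on the elements `g` of `G` with
`(g - id)(Ṽ) ⊆ N`; for `χ ≠ 1` this is the hyperplane `H_χ` of `H`. -/
structure IsCharKernel {H : Submodule F (Fin n → F)} (χ : Gsub F n H →* ℂ)
    (N : Submodule F (Fin n → F)) : Prop where
  le : N ≤ H
  le_iff : ∀ y ≤ H, y ≤ N ↔ ∀ g : Gsub F n H, memK F n y g.1 → χ g = 1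

theorem exists_isCharKernel {f : Dual F (Fin n → F)} {u₀ : Fin n → F} (hu : f u₀ = 1)
    {χ : Gsub F n (LinearMap.ker f) →* ℂ} (hχ : χ ≠ 1) :
    ∃ N, IsCharKernel χ N ∧ finrank F N + 1 = finrank F (LinearMap.ker f) := by
  let ψ : AddChar (LinearMap.ker f) ℂ :=
    AddChar.toMonoidHomEquiv.symm (χ.comp (kerMulEquivGsub hu).toMonoidHom)
  have hψ (h) : ψ h = χ (kerMulEquivGsub hu (.ofAdd h)) := rfl
  have hψ1 : ψ ≠ 1 := fun h1 => hχ <| MonoidHom.ext fun g => by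
    simpa [hψ] using DFunLike.congr_fun h1 ((kerMulEquivGsub hu).symm g).toAdd
  obtain ⟨N, hN, hle⟩ := exists_submodule_le_iff_forall_addChar_eq_one (F := F) hψ1
  refine ⟨N.map (LinearMap.ker f).subtype, ⟨Submodule.map_subtype_le _ N, fun y hy => ?_⟩, ?_⟩
  · rw [← inf_eq_right.2 hy, ← Submodule.map_comap_subtype,
      Submodule.map_le_map_iff_of_injective (Submodule.subtype_injective _), hle,
      Submodule.map_comap_subtype, inf_eq_right.2 hy, (kerMulEquivGsub hu).surjective.forall]
    simp only [memK_kerMulEquivGsub]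
    rfl
  · rw [Submodule.finrank_map_subtype_eq, hN]

end CharacterKernel

section EquivariantVectors

variable {F : Type} [Field F] {n : ℕ} {H : Submodule F (Fin n → F)} {χ : Gsub F n H →* ℂ}
  {m : Submodule F (Fin n → F) → ℂ}

theorem mem_Mcomp_univ : m ∈ Mcomp F n H χ Set.univ ↔
    ∀ (g : Gsub F n H) (z), m z = χ g * m (smap F n g.1 z) := by
  constructor
  · rintro ⟨-, hm⟩ g z
    rw [← hm g, ← smap_mul, ← Subgroup.coe_mul, inv_mul_cancel]
    exact congrArg m (Submodule.map_id z).symm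
  · refine fun hm => ⟨fun y hy => absurd (Set.mem_univ y) hy, fun g y => ?_⟩
    rw [hm g, ← smap_mul, ← Subgroup.coe_mul, mul_inv_cancel]
    exact congrArg (χ g * m ·) (Submodule.map_id y)

theorem apply_eq_zero_of_smap_eq (hm : m ∈ Mcomp F n H χ Set.univ) {g : Gsub F n H}
    (hg : χ g ≠ 1) {z : Submodule F (Fin n → F)} (hz : smap F n g.1 z = z) : m z = 0 := by
  have hmz := mem_Mcomp_univ.1 hm g z
  rw [hz] at hmz
  by_contra hz0
  exact hg (mul_right_cancel₀ hz0 (hmz.symm.trans (one_mul _).symm))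

theorem apply_eq_zero_of_le (hχ : χ ≠ 1) (hm : m ∈ Mcomp F n H χ Set.univ)
    {z : Submodule F (Fin n → F)} (hz : z ≤ H) : m z = 0 := by
  obtain ⟨g, hg⟩ := DFunLike.ne_iff.1 hχ
  exact apply_eq_zero_of_smap_eq hm hg (smap_eq_self_of_le g hz)

theorem Mcomp_univ_eq (hχ : χ ≠ 1) : Mcomp F n H χ Set.univ = Mcomp F n H χ {y | ¬ y ≤ H} := by
  ext m
  refine ⟨fun hm => ⟨fun y hy => apply_eq_zero_of_le hχ hm (not_not.1 hy), hm.2⟩,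
    fun hm => ⟨fun y hy => absurd (Set.mem_univ y) hy, hm.2⟩⟩

theorem apply_eq_zero_of_not_le_charKernel [Fintype F] {N : Submodule F (Fin n → F)}
    (hN : IsCharKernel χ N) (hm : m ∈ Mcomp F n H χ Set.univ) {y z : Submodule F (Fin n → F)}
    (hyH : y ≤ H) (hyN : ¬ y ≤ N) (hyz : y ≤ z) : m z = 0 := by
  rw [hN.le_iff y hyH] at hyN
  push Not at hyN
  obtain ⟨g, hgy, hg⟩ := hyN
  exact apply_eq_zero_of_smap_eq hm hg (smap_eq_self_of_memK hgy hyz)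

theorem Mcomp_univ_ext [Fintype F] {f : Dual F (Fin n → F)} {u₀ : Fin n → F} (hu : f u₀ = 1)
    {χ : Gsub F n (LinearMap.ker f) →* ℂ} (hχ : χ ≠ 1) {N : Submodule F (Fin n → F)}
    (hN : IsCharKernel χ N) {m m' : Submodule F (Fin n → F) → ℂ}
    (hm : m ∈ Mcomp F n (LinearMap.ker f) χ Set.univ)
    (hm' : m' ∈ Mcomp F n (LinearMap.ker f) χ Set.univ)
    (h : ∀ y ≤ N, m (y ⊔ Submodule.span F {u₀}) = m' (y ⊔ Submodule.span F {u₀})) : m = m' := by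
  ext z
  by_cases hz : z ≤ LinearMap.ker f
  · rw [apply_eq_zero_of_le hχ hm hz, apply_eq_zero_of_le hχ hm' hz]
  obtain ⟨g, hg⟩ := exists_smap_eq_inf_sup hu hz
  rw [mem_Mcomp_univ.1 hm g, mem_Mcomp_univ.1 hm' g, hg]
  congr 1
  by_cases hzN : LinearMap.ker f ⊓ z ≤ N
  · exact h _ hzN
  · rw [apply_eq_zero_of_not_le_charKernel hN hm inf_le_left hzN le_sup_left,
      apply_eq_zero_of_not_le_charKernel hN hm' inf_le_left hzN le_sup_left]

end EquivariantVectors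

section Projection

variable {F : Type} [Field F] [Fintype F] {n : ℕ} {H : Submodule F (Fin n → F)}
  [Fintype (Gsub F n H)] {χ : Gsub F n H →* ℂ}

theorem echi_eq_sum (χ : Gsub F n H →* ℂ) (w : Submodule F (Fin n → F) → ℂ) :
    echi F n H χ w = ((Fintype.card F : ℂ) ^ (n - 1))⁻¹ •
      ∑ g : Gsub F n H, χ g • (w ∘ smap F n g.1) := by
  ext z
  rw [echi, ← Equiv.sum_comp (Equiv.inv (Gsub F n H))]
  simp

theorem echi_apply (χ : Gsub F n H →* ℂ) (w : Submodule F (Fin n → F) → ℂ)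
    (z : Submodule F (Fin n → F)) : echi F n H χ w z =
      ((Fintype.card F : ℂ) ^ (n - 1))⁻¹ * ∑ g : Gsub F n H, χ g * w (smap F n g.1 z) := by
  simp [echi_eq_sum]

theorem echi_mem_Mcomp_univ (w : Submodule F (Fin n → F) → ℂ) :
    echi F n H χ w ∈ Mcomp F n H χ Set.univ := by
  refine mem_Mcomp_univ.2 fun g z => ?_
  rw [echi_apply, echi_apply, mul_left_comm (χ g), ← Equiv.sum_comp (Equiv.mulRight g),
    Finset.mul_sum _ _ (χ g)]
  simp only [Equiv.coe_mulRight, map_mul, Subgroup.coe_mul, smap_mul, mul_comm (χ g),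
    mul_right_comm]

end Projection

section InvariantMatrices

variable {F : Type} [Field F] {n : ℕ} {H : Submodule F (Fin n → F)} {χ : Gsub F n H →* ℂ}
  {A : Matrix (Submodule F (Fin n → F)) (Submodule F (Fin n → F)) ℂ}

/-- The matrix `A` commutes with the action of `G` on `ℂP̃`. -/
def IsSmapInvariant (H : Submodule F (Fin n → F))
    (A : Matrix (Submodule F (Fin n → F)) (Submodule F (Fin n → F)) ℂ) : Prop :=
  ∀ (g : Gsub F n H) (y z), A (smap F n g.1 y) (smap F n g.1 z) = A y z

theorem IsSmapInvariant.transpose (hA : IsSmapInvariant H A) :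
    IsSmapInvariant H A.transpose :=
  fun g y z => hA g z y

variable [Fintype (Submodule F (Fin n → F))]

theorem IsSmapInvariant.mulVec_comp_smap (hA : IsSmapInvariant H A) (g : Gsub F n H)
    (w : Submodule F (Fin n → F) → ℂ) :
    A.mulVec (w ∘ smap F n g.1) = A.mulVec w ∘ smap F n g.1 := by
  ext z
  simp only [Function.comp_apply, Matrix.mulVec, dotProduct]
  refine (Finset.sum_congr rfl fun y _ => congrArg (· * _) (hA g z y).symm).trans ?_
  exact (Submodule.orderIsoMapComap g.1).toEquiv.sum_comp fun y => A (smap F n g.1 z) y * w y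

theorem IsSmapInvariant.mulVec_mem_Mcomp_univ (hA : IsSmapInvariant H A)
    {m : Submodule F (Fin n → F) → ℂ} (hm : m ∈ Mcomp F n H χ Set.univ) :
    A.mulVec m ∈ Mcomp F n H χ Set.univ := by
  refine mem_Mcomp_univ.2 fun g z => ?_
  have hmg : m = χ g • (m ∘ smap F n g.1) := funext (mem_Mcomp_univ.1 hm g)
  conv_lhs => rw [hmg, Matrix.mulVec_smul, hA.mulVec_comp_smap]
  rfl

theorem IsSmapInvariant.mulVec_echi [Fintype F] [Fintype (Gsub F n H)] (hA : IsSmapInvariant H A)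
    (w : Submodule F (Fin n → F) → ℂ) :
    A.mulVec (echi F n H χ w) = echi F n H χ (A.mulVec w) := by
  rw [echi_eq_sum, echi_eq_sum, ← Matrix.mulVecLin_apply, map_smul, map_sum]
  simp only [map_smul, Matrix.mulVecLin_apply, hA.mulVec_comp_smap]

end InvariantMatrices

section Theta

variable {F : Type} [Field F] {n : ℕ}

open Classical in
/-- The image of `v ∈ ℂP̃` under the linear map sending `y ≤ H` to `y ∨ u` and every other
subspace to `0`, for a complement `u` of `H`. -/
noncomputable def joinVec (H u : Submodule F (Fin n → F)) (v : Submodule F (Fin n → F) → ℂ) :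
    Submodule F (Fin n → F) → ℂ :=
  fun z => if u ≤ z then v (H ⊓ z) else 0

variable [Fintype (Submodule F (Fin n → F))]

open Classical in
theorem sum_delta_sup_mul_eq_joinVec {H u : Submodule F (Fin n → F)} (h : IsCompl H u)
    (v : Submodule F (Fin n → F) → ℂ) (z : Submodule F (Fin n → F)) :
    ∑ y, (if y ≤ H then delta F n (y ⊔ u) z else 0) * v y = joinVec H u v z := by
  rw [Finset.sum_eq_single (H ⊓ z)]
  · simp [delta, joinVec, eq_sup_iff_of_isCompl h]
  · intro y _ hy
    by_cases hyH : y ≤ H <;> simp [delta, eq_sup_iff_of_isCompl h, hyH, hy]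
  · simp

variable [Fintype F]

theorem Theta_mulVec {H u : Submodule F (Fin n → F)} [Fintype (Gsub F n H)] (h : IsCompl H u)
    (χ : Gsub F n H →* ℂ) (v : Submodule F (Fin n → F) → ℂ) :
    (Theta F n H χ u).mulVec v = echi F n H χ (joinVec H u v) := by
  classical
  ext z
  simp only [Matrix.mulVec, dotProduct, Theta, echi_apply, ← sum_delta_sup_mul_eq_joinVec h,
    Finset.mul_sum]
  rw [Finset.sum_comm]
  refine Finset.sum_congr rfl fun y _ => ?_
  split_ifs
  · rw [Finset.sum_mul]
    exact Finset.sum_congr rfl fun g _ => by ring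
  · simp

variable {f : Dual F (Fin n → F)} {u₀ : Fin n → F} [Fintype (Gsub F n (LinearMap.ker f))]
  {χ : Gsub F n (LinearMap.ker f) →* ℂ} {N : Submodule F (Fin n → F)}

theorem Theta_mulVec_mem_Mcomp_univ (hu : f u₀ = 1) (v : Submodule F (Fin n → F) → ℂ) :
    (Theta F n (LinearMap.ker f) χ (Submodule.span F {u₀})).mulVec v ∈
      Mcomp F n (LinearMap.ker f) χ Set.univ := by
  rw [Theta_mulVec (isCompl_ker_span_singleton (by simp [hu]))]
  exact echi_mem_Mcomp_univ _

theorem Theta_mulVec_sup (hu : f u₀ = 1) (hN : IsCharKernel χ N)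
    {y : Submodule F (Fin n → F)} (hy : y ≤ N) (v : Submodule F (Fin n → F) → ℂ) :
    (Theta F n (LinearMap.ker f) χ (Submodule.span F {u₀})).mulVec v
        (y ⊔ Submodule.span F {u₀}) =
      ((Fintype.card F : ℂ) ^ (n - 1))⁻¹ * (Fintype.card F : ℂ) ^ finrank F y * v y := by
  classical
  have hyH := hy.trans hN.le
  have hcompl : IsCompl (LinearMap.ker f) (Submodule.span F {u₀}) :=
    isCompl_ker_span_singleton (by simp [hu])
  have hterm (g : Gsub F n (LinearMap.ker f)) :
      χ g * joinVec (LinearMap.ker f) (Submodule.span F {u₀}) v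
        (smap F n g.1 (y ⊔ Submodule.span F {u₀})) = if memK F n y g.1 then v y else 0 := by
    simp only [joinVec, span_singleton_le_smap_sup_iff hu hyH, inf_smap g le_rfl,
      inf_sup_eq_of_isCompl hcompl hyH]
    split_ifs with hg
    · rw [(hN.le_iff y hyH).1 hy g hg, one_mul]
    · rw [mul_zero]
  rw [Theta_mulVec hcompl, echi_apply, Finset.sum_congr rfl fun g _ => hterm g,
    ← Finset.sum_filter, Finset.sum_const, ← Fintype.card_subtype,
    Fintype.card_eq_nat_card (α := {g : Gsub F n (LinearMap.ker f) // memK F n y g.1}),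
    natCard_memK hu hyH]
  simp [mul_assoc]

theorem Theta_mulVec_eq_iff (hu : f u₀ = 1) (hχ : χ ≠ 1) (hN : IsCharKernel χ N)
    {v w : Submodule F (Fin n → F) → ℂ} :
    (Theta F n (LinearMap.ker f) χ (Submodule.span F {u₀})).mulVec v =
        (Theta F n (LinearMap.ker f) χ (Submodule.span F {u₀})).mulVec w ↔
      ∀ y ≤ N, v y = w y := by
  refine ⟨fun h y hy => ?_, fun h => ?_⟩
  · have hy' := congrFun h (y ⊔ Submodule.span F {u₀})
    rw [Theta_mulVec_sup hu hN hy, Theta_mulVec_sup hu hN hy] at hy'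
    exact mul_left_cancel₀ (by simp) hy'
  · refine Mcomp_univ_ext hu hχ hN (Theta_mulVec_mem_Mcomp_univ hu v)
      (Theta_mulVec_mem_Mcomp_univ hu w) fun y hy => ?_
    rw [Theta_mulVec_sup hu hN hy, Theta_mulVec_sup hu hN hy, h y hy]

theorem eq_of_Theta_mulVec_eq (hu : f u₀ = 1) (hχ : χ ≠ 1) (hN : IsCharKernel χ N)
    {v w : Submodule F (Fin n → F) → ℂ} (hv : ∀ y, ¬ y ≤ N → v y = 0)
    (hw : ∀ y, ¬ y ≤ N → w y = 0)
    (h : (Theta F n (LinearMap.ker f) χ (Submodule.span F {u₀})).mulVec v =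
      (Theta F n (LinearMap.ker f) χ (Submodule.span F {u₀})).mulVec w) : v = w := by
  ext y
  by_cases hy : y ≤ N
  · exact (Theta_mulVec_eq_iff hu hχ hN).1 h y hy
  · rw [hv y hy, hw y hy]

theorem exists_Theta_mulVec_eq (hu : f u₀ = 1) (hχ : χ ≠ 1) (hN : IsCharKernel χ N)
    {m : Submodule F (Fin n → F) → ℂ} (hm : m ∈ Mcomp F n (LinearMap.ker f) χ Set.univ) :
    ∃ v : Submodule F (Fin n → F) → ℂ, (∀ y, ¬ y ≤ N → v y = 0) ∧
      (Theta F n (LinearMap.ker f) χ (Submodule.span F {u₀})).mulVec v = m := by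
  classical
  refine ⟨fun y => if y ≤ N then (((Fintype.card F : ℂ) ^ (n - 1))⁻¹ *
    (Fintype.card F : ℂ) ^ finrank F y)⁻¹ * m (y ⊔ Submodule.span F {u₀}) else 0,
    fun y hy => if_neg hy, ?_⟩
  refine Mcomp_univ_ext hu hχ hN (Theta_mulVec_mem_Mcomp_univ hu _) hm fun y hy => ?_
  rw [Theta_mulVec_sup hu hN hy, if_pos hy, mul_inv_cancel_left₀ (by simp)]

end Theta

section Support

variable {F : Type} [Field F] [Fintype F] {n : ℕ} {f : Dual F (Fin n → F)} {u₀ : Fin n → F}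
  [Fintype (Gsub F n (LinearMap.ker f))] {χ : Gsub F n (LinearMap.ker f) →* ℂ}
  {N : Submodule F (Fin n → F)}

theorem echi_delta_sup_ne_zero_iff (hu : f u₀ = 1) (hχ : χ ≠ 1) (hN : IsCharKernel χ N)
    {y : Submodule F (Fin n → F)} (hy : y ≤ LinearMap.ker f) :
    echi F n (LinearMap.ker f) χ (delta F n (y ⊔ Submodule.span F {u₀})) ≠ 0 ↔ y ≤ N := by
  classical
  cases nonempty_fintype (Submodule F (Fin n → F))
  have hcol : echi F n (LinearMap.ker f) χ (delta F n (y ⊔ Submodule.span F {u₀})) =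
      (Theta F n (LinearMap.ker f) χ (Submodule.span F {u₀})).mulVec (Pi.single y 1) := by
    ext z
    simp [Theta, hy]
  rw [hcol, ← Matrix.mulVec_zero (Theta F n _ χ (Submodule.span F {u₀})), Ne,
    Theta_mulVec_eq_iff hu hχ hN]
  constructor
  · intro h
    by_contra hyN
    exact h fun y' hy' => Pi.single_eq_of_ne (by rintro rfl; exact hyN hy') 1
  · exact fun hyN h => by simpa using h y hyN

theorem eq_charKernel_of_forall_echi_ne_zero_iff (hu : f u₀ = 1) (hχ : χ ≠ 1)
    (hN : IsCharKernel χ N) {N' : Submodule F (Fin n → F)} (hN' : N' ≤ LinearMap.ker f)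
    (h : ∀ y ≤ LinearMap.ker f, echi F n (LinearMap.ker f) χ
      (delta F n (y ⊔ Submodule.span F {u₀})) ≠ 0 ↔ y ≤ N') : N' = N :=
  le_antisymm ((echi_delta_sup_ne_zero_iff hu hχ hN hN').1 ((h N' hN').2 le_rfl))
    ((h N hN.le).1 ((echi_delta_sup_ne_zero_iff hu hχ hN hN.le).2 le_rfl))

end Support

section Matrices

variable {F : Type} [Field F] {n : ℕ} {r s : ℕ → ℕ → Prop} {x H u : Submodule F (Fin n → F)}

open Classical in
/-- The common form of `L̃₁`, `L̃₂`, `L̃₃`: the relations `r`, `s` prescribe how the dimensions of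
the intersections with `x` and with `H` change along `y ⊂ z`. -/
noncomputable def twistedLowering (r s : ℕ → ℕ → Prop) (x H : Submodule F (Fin n → F)) :
    Matrix (Submodule F (Fin n → F)) (Submodule F (Fin n → F)) ℂ :=
  fun y z => if y ≤ z ∧ finrank F y + 1 = finrank F z ∧
    r (finrank F ↥(x ⊓ y)) (finrank F ↥(x ⊓ z)) ∧
    s (finrank F ↥(H ⊓ y)) (finrank F ↥(H ⊓ z)) then 1 else 0

open Classical in
/-- The common form of `L₁` and `L₂`: the relation `r` prescribes how the dimension of the
intersection with `x` changes along `y ⊂ z`. -/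
noncomputable def relLowering (r : ℕ → ℕ → Prop) (x H : Submodule F (Fin n → F)) :
    Matrix (Submodule F (Fin n → F)) (Submodule F (Fin n → F)) ℂ :=
  fun y z => if z ≤ H ∧ y ≤ z ∧ finrank F y + 1 = finrank F z ∧
    r (finrank F ↥(x ⊓ y)) (finrank F ↥(x ⊓ z)) then 1 else 0

theorem LoneT_eq_twistedLowering : LoneT F n x H =
    twistedLowering (fun i j => i + 1 = j) (fun i j => i + 1 = j) x H := by
  funext y z
  simp only [LoneT, twistedLowering]
  congr

theorem LtwoT_eq_twistedLowering : LtwoT F n x H =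
    twistedLowering (fun i j => i = j) (fun i j => i + 1 = j) x H := by
  funext y z
  simp only [LtwoT, twistedLowering]
  congr

theorem LthreeT_eq_twistedLowering : LthreeT F n x H =
    twistedLowering (fun i j => i = j) (fun i j => i = j) x H := by
  funext y z
  simp only [LthreeT, twistedLowering]
  congr

theorem RoneT_eq_transpose : RoneT F n x H =
    (twistedLowering (fun i j => i + 1 = j) (fun i j => i + 1 = j) x H).transpose := by
  rw [← LoneT_eq_twistedLowering]
  rfl

theorem RtwoT_eq_transpose : RtwoT F n x H =
    (twistedLowering (fun i j => i = j) (fun i j => i + 1 = j) x H).transpose := by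
  rw [← LtwoT_eq_twistedLowering]
  rfl

theorem RthreeT_eq_transpose : RthreeT F n x H =
    (twistedLowering (fun i j => i = j) (fun i j => i = j) x H).transpose := by
  rw [← LthreeT_eq_twistedLowering]
  rfl

theorem LoneRel_eq_relLowering :
    LoneRel F n x H = relLowering (fun i j => i + 1 = j) x H := by
  funext y z
  simp only [LoneRel, relLowering]
  congr

theorem LtwoRel_eq_relLowering : LtwoRel F n x H = relLowering (fun i j => i = j) x H := by
  funext y z
  simp only [LtwoRel, relLowering]
  congr

theorem RoneRel_eq_transpose :
    RoneRel F n x H = (relLowering (fun i j => i + 1 = j) x H).transpose := by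
  rw [← LoneRel_eq_relLowering]
  rfl

theorem RtwoRel_eq_transpose :
    RtwoRel F n x H = (relLowering (fun i j => i = j) x H).transpose := by
  rw [← LtwoRel_eq_relLowering]
  rfl

theorem twistedLowering_of_not_le {y z : Submodule F (Fin n → F)} (h : ¬ y ≤ z) :
    twistedLowering r s x H y z = 0 :=
  if_neg fun h' => h h'.1

theorem isSmapInvariant_twistedLowering (hx : x ≤ H) :
    IsSmapInvariant H (twistedLowering r s x H) := by
  classical
  intro g y z
  simp only [twistedLowering, finrank_smap, finrank_inf_smap g hx, finrank_inf_smap g le_rfl]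
  simp only [smap_eq_orderIso, OrderIso.le_iff_le]

theorem relLowering_eq_of_le {N y z : Submodule F (Fin n → F)} (hH : z ≤ H) (hN : z ≤ N) :
    relLowering r x H y z = relLowering r x N y z := by
  classical
  simp only [relLowering, hH, hN]

theorem finrank_sup_of_isCompl (h : IsCompl H u) {y : Submodule F (Fin n → F)} (hy : y ≤ H) :
    finrank F ↥(y ⊔ u) = finrank F y + finrank F u := by
  rw [← Submodule.finrank_sup_add_finrank_inf_eq, (h.disjoint.mono_left hy).eq_bot, finrank_bot,
    add_zero]

theorem finrank_inf_sup_of_isCompl (h : IsCompl H u) (hx : x ≤ H) {y : Submodule F (Fin n → F)}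
    (hy : y ≤ H) : finrank F ↥(x ⊓ (y ⊔ u)) = finrank F ↥(x ⊓ y) := by
  rw [← inf_eq_left.2 hx, inf_assoc, inf_sup_eq_of_isCompl h hy, inf_assoc, inf_eq_right.2 hy]

theorem twistedLowering_sup_sup (h : IsCompl H u) (hx : x ≤ H) {y z : Submodule F (Fin n → F)}
    (hy : y ≤ H) (hz : z ≤ H) :
    twistedLowering r (fun i j => i + 1 = j) x H (y ⊔ u) (z ⊔ u) = relLowering r x H y z := by
  classical
  have hle : y ⊔ u ≤ z ⊔ u ↔ y ≤ z :=
    ⟨fun hyz => by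
      simpa only [inf_sup_eq_of_isCompl h hy, inf_sup_eq_of_isCompl h hz] using
        inf_le_inf_left H hyz,
      fun hyz => sup_le_sup_right hyz u⟩
  have hdim {y : Submodule F (Fin n → F)} (hy : y ≤ H) :
      finrank F ↥(H ⊓ (y ⊔ u)) = finrank F y := by
    rw [inf_sup_eq_of_isCompl h hy]
  simp only [twistedLowering, relLowering, hle, finrank_sup_of_isCompl h hy,
    finrank_sup_of_isCompl h hz, finrank_inf_sup_of_isCompl h hx hy,
    finrank_inf_sup_of_isCompl h hx hz, hdim hy, hdim hz]
  refine if_congr ⟨fun ⟨hyz, _, hr, hdim⟩ => ⟨hz, hyz, hdim, hr⟩,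
    fun ⟨_, hyz, hdim, hr⟩ => ⟨hyz, by omega, hr, hdim⟩⟩ rfl rfl

theorem twistedLowering_eq_zero_of_isCoatom (hH : IsCoatom H) {y z : Submodule F (Fin n → F)}
    (hy : ¬ y ≤ H) : twistedLowering r (fun i j => i = j) x H y z = 0 := by
  refine if_neg fun ⟨hyz, hdim, _, hHdim⟩ => hy ?_
  refine le_of_inf_eq_inf_of_isCoatom hH (lt_of_le_of_ne hyz ?_)
    (Submodule.eq_of_le_of_finrank_eq (inf_le_inf_left H hyz) hHdim)
  rintro rfl
  omega

variable [Fintype (Submodule F (Fin n → F))]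

theorem twistedLowering_mulVec_sup (h : IsCompl H u) (hx : x ≤ H)
    {y : Submodule F (Fin n → F)} (hy : y ≤ H) (w : Submodule F (Fin n → F) → ℂ) :
    (twistedLowering r (fun i j => i + 1 = j) x H).mulVec w (y ⊔ u) =
      (relLowering r x H).mulVec (fun z => w (z ⊔ u)) y := by
  classical
  calc ∑ z, twistedLowering r (fun i j => i + 1 = j) x H (y ⊔ u) z * w z
      = ∑ z, if u ≤ z then twistedLowering r (fun i j => i + 1 = j) x H (y ⊔ u) z * w z
          else 0 := by
        refine Finset.sum_congr rfl fun z _ => ?_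
        split_ifs with hz
        · rfl
        · rw [twistedLowering_of_not_le fun hyz => hz (le_sup_right.trans hyz), zero_mul]
    _ = ∑ z, if z ≤ H then
          twistedLowering r (fun i j => i + 1 = j) x H (y ⊔ u) (z ⊔ u) * w (z ⊔ u) else 0 :=
        sum_Ici_eq_sum_Iic_of_isCompl h _
    _ = ∑ z, relLowering r x H y z * w (z ⊔ u) := by
        refine Finset.sum_congr rfl fun z _ => ?_
        split_ifs with hz
        · rw [twistedLowering_sup_sup h hx hy hz]
        · simp [relLowering, hz]

theorem transpose_twistedLowering_mulVec_joinVec (h : IsCompl H u) (hx : x ≤ H)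
    (v : Submodule F (Fin n → F) → ℂ) :
    (twistedLowering r (fun i j => i + 1 = j) x H).transpose.mulVec (joinVec H u v) =
      joinVec H u ((relLowering r x H).transpose.mulVec v) := by
  classical
  ext z
  by_cases hz : u ≤ z
  · calc ∑ z', twistedLowering r (fun i j => i + 1 = j) x H z' z * joinVec H u v z'
        = ∑ z', if u ≤ z' then
            twistedLowering r (fun i j => i + 1 = j) x H z' z * v (H ⊓ z') else 0 := by
          simp only [joinVec, mul_ite, mul_zero]
      _ = ∑ y, if y ≤ H then
            twistedLowering r (fun i j => i + 1 = j) x H (y ⊔ u) z * v (H ⊓ (y ⊔ u)) else 0 :=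
          sum_Ici_eq_sum_Iic_of_isCompl h _
      _ = ∑ y, relLowering r x H y (H ⊓ z) * v y := by
          refine Finset.sum_congr rfl fun y _ => ?_
          split_ifs with hy
          · nth_rw 1 [inf_sup_eq_of_isCompl h hy, ← inf_sup_eq_of_isCompl_of_le h hz,
              twistedLowering_sup_sup h hx hy inf_le_left]
          · rw [relLowering, if_neg fun h' => hy (h'.2.1.trans inf_le_left), zero_mul]
      _ = joinVec H u ((relLowering r x H).transpose.mulVec v) z := (if_pos hz).symm
  · rw [joinVec, if_neg hz]
    refine Finset.sum_eq_zero fun z' _ => ?_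
    by_cases hz' : u ≤ z'
    · have hlow : twistedLowering r (fun i j => i + 1 = j) x H z' z = 0 :=
        twistedLowering_of_not_le fun h' => hz (hz'.trans h')
      exact mul_eq_zero_of_left hlow _
    · rw [joinVec, if_neg hz', mul_zero]

end Matrices

section Relations

variable {F : Type} [Field F] {n : ℕ} [Fintype (Submodule F (Fin n → F))]

theorem twistedLowering_mulVec_eq_zero {H : Submodule F (Fin n → F)} {χ : Gsub F n H →* ℂ}
    {r : ℕ → ℕ → Prop} {x : Submodule F (Fin n → F)} {m : Submodule F (Fin n → F) → ℂ}
    (hH : IsCoatom H) (hx : x ≤ H) (hχ : χ ≠ 1) (hm : m ∈ Mcomp F n H χ Set.univ) :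
    (twistedLowering r (fun i j => i = j) x H).mulVec m = 0 := by
  ext z
  by_cases hz : z ≤ H
  · exact apply_eq_zero_of_le hχ ((isSmapInvariant_twistedLowering hx).mulVec_mem_Mcomp_univ hm) hz
  · exact Finset.sum_eq_zero fun z' _ =>
      mul_eq_zero_of_left (twistedLowering_eq_zero_of_isCoatom hH hz) _

theorem transpose_twistedLowering_mulVec_eq_zero {H : Submodule F (Fin n → F)}
    {χ : Gsub F n H →* ℂ} {r : ℕ → ℕ → Prop} {x : Submodule F (Fin n → F)}
    {m : Submodule F (Fin n → F) → ℂ} (hH : IsCoatom H) (hχ : χ ≠ 1)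
    (hm : m ∈ Mcomp F n H χ Set.univ) :
    (twistedLowering r (fun i j => i = j) x H).transpose.mulVec m = 0 := by
  ext z
  refine Finset.sum_eq_zero fun z' _ => ?_
  by_cases hz' : z' ≤ H
  · rw [apply_eq_zero_of_le hχ hm hz', mul_zero]
  · exact mul_eq_zero_of_left (twistedLowering_eq_zero_of_isCoatom hH hz') _

theorem LthreeT_mulVec_eq_zero {H x : Submodule F (Fin n → F)} {χ : Gsub F n H →* ℂ}
    {m : Submodule F (Fin n → F) → ℂ} (hH : IsCoatom H) (hx : x ≤ H) (hχ : χ ≠ 1)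
    (hm : m ∈ Mcomp F n H χ Set.univ) : (LthreeT F n x H).mulVec m = 0 := by
  rw [LthreeT_eq_twistedLowering, twistedLowering_mulVec_eq_zero hH hx hχ hm]

theorem RthreeT_mulVec_eq_zero {H x : Submodule F (Fin n → F)} {χ : Gsub F n H →* ℂ}
    {m : Submodule F (Fin n → F) → ℂ} (hH : IsCoatom H) (hχ : χ ≠ 1)
    (hm : m ∈ Mcomp F n H χ Set.univ) : (RthreeT F n x H).mulVec m = 0 := by
  rw [RthreeT_eq_transpose, transpose_twistedLowering_mulVec_eq_zero hH hχ hm]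

variable [Fintype F] {f : Dual F (Fin n → F)} {u₀ : Fin n → F}
  [Fintype (Gsub F n (LinearMap.ker f))] {χ : Gsub F n (LinearMap.ker f) →* ℂ}
  {x N : Submodule F (Fin n → F)}

theorem relLowering_mul_Theta_mulVec_sup (hu : f u₀ = 1) (hN : IsCharKernel χ N)
    (r : ℕ → ℕ → Prop) (v : Submodule F (Fin n → F) → ℂ) (y z : Submodule F (Fin n → F)) :
    relLowering r x (LinearMap.ker f) y z *
        (Theta F n (LinearMap.ker f) χ (Submodule.span F {u₀})).mulVec v
          (z ⊔ Submodule.span F {u₀}) =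
      (Fintype.card F : ℂ) * (((Fintype.card F : ℂ) ^ (n - 1))⁻¹ *
        (Fintype.card F : ℂ) ^ finrank F y) * (relLowering r x N y z * v z) := by
  by_cases hz : z ≤ N
  · rw [relLowering_eq_of_le (hz.trans hN.le) hz, Theta_mulVec_sup hu hN hz]
    by_cases hdim : finrank F y + 1 = finrank F z
    · rw [← hdim, pow_succ]
      ring
    · have hrel : relLowering r x N y z = 0 := if_neg fun h => hdim h.2.2.1
      rw [hrel, zero_mul, zero_mul, mul_zero]
  · have hrel : relLowering r x N y z = 0 := if_neg fun h => hz h.1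
    rw [hrel, zero_mul, mul_zero]
    by_cases hzH : z ≤ LinearMap.ker f
    · rw [apply_eq_zero_of_not_le_charKernel hN (Theta_mulVec_mem_Mcomp_univ hu v) hzH hz
        le_sup_left, mul_zero]
    · exact mul_eq_zero_of_left (if_neg fun h => hzH h.1) _

theorem twistedLowering_mulVec_Theta (hu : f u₀ = 1) (hχ : χ ≠ 1) (hN : IsCharKernel χ N)
    (hx : x ≤ LinearMap.ker f) (r : ℕ → ℕ → Prop) (v : Submodule F (Fin n → F) → ℂ) :
    (twistedLowering r (fun i j => i + 1 = j) x (LinearMap.ker f)).mulVec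
        ((Theta F n (LinearMap.ker f) χ (Submodule.span F {u₀})).mulVec v) =
      (Fintype.card F : ℂ) • (Theta F n (LinearMap.ker f) χ (Submodule.span F {u₀})).mulVec
        ((relLowering r x N).mulVec v) := by
  have hΘ (w) : (Theta F n _ χ (Submodule.span F {u₀})).mulVec w ∈ Mcomp F n _ χ Set.univ :=
    Theta_mulVec_mem_Mcomp_univ hu w
  refine Mcomp_univ_ext hu hχ hN
    ((isSmapInvariant_twistedLowering hx).mulVec_mem_Mcomp_univ (hΘ v))
    (Submodule.smul_mem _ _ (hΘ _)) fun y hy => ?_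
  rw [twistedLowering_mulVec_sup (isCompl_ker_span_singleton (by simp [hu])) hx (hy.trans hN.le),
    Pi.smul_apply, Theta_mulVec_sup hu hN hy, smul_eq_mul,
    ← mul_assoc]
  exact (Finset.sum_congr rfl fun z _ => relLowering_mul_Theta_mulVec_sup hu hN r v y z).trans
    (Finset.mul_sum _ _ _).symm

theorem transpose_twistedLowering_mulVec_Theta (hu : f u₀ = 1) (hχ : χ ≠ 1)
    (hN : IsCharKernel χ N) (hx : x ≤ LinearMap.ker f) (r : ℕ → ℕ → Prop)
    (v : Submodule F (Fin n → F) → ℂ) :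
    (twistedLowering r (fun i j => i + 1 = j) x (LinearMap.ker f)).transpose.mulVec
        ((Theta F n (LinearMap.ker f) χ (Submodule.span F {u₀})).mulVec v) =
      (Theta F n (LinearMap.ker f) χ (Submodule.span F {u₀})).mulVec
        ((relLowering r x N).transpose.mulVec v) := by
  have hcompl : IsCompl (LinearMap.ker f) (Submodule.span F {u₀}) :=
    isCompl_ker_span_singleton (by simp [hu])
  rw [Theta_mulVec hcompl, (isSmapInvariant_twistedLowering hx).transpose.mulVec_echi,
    transpose_twistedLowering_mulVec_joinVec hcompl hx, ← Theta_mulVec hcompl,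
    Theta_mulVec_eq_iff hu hχ hN]
  exact fun y hy => Finset.sum_congr rfl fun z _ =>
    congrArg (· * v z) (relLowering_eq_of_le (hy.trans hN.le) hy)

theorem LoneT_mulVec_Theta (hu : f u₀ = 1) (hχ : χ ≠ 1) (hN : IsCharKernel χ N)
    (hx : x ≤ LinearMap.ker f) (v : Submodule F (Fin n → F) → ℂ) :
    (LoneT F n x (LinearMap.ker f)).mulVec
        ((Theta F n (LinearMap.ker f) χ (Submodule.span F {u₀})).mulVec v) =
      (Fintype.card F : ℂ) • (Theta F n (LinearMap.ker f) χ (Submodule.span F {u₀})).mulVec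
        ((LoneRel F n x N).mulVec v) := by
  rw [LoneT_eq_twistedLowering, LoneRel_eq_relLowering,
    twistedLowering_mulVec_Theta hu hχ hN hx]

theorem LtwoT_mulVec_Theta (hu : f u₀ = 1) (hχ : χ ≠ 1) (hN : IsCharKernel χ N)
    (hx : x ≤ LinearMap.ker f) (v : Submodule F (Fin n → F) → ℂ) :
    (LtwoT F n x (LinearMap.ker f)).mulVec
        ((Theta F n (LinearMap.ker f) χ (Submodule.span F {u₀})).mulVec v) =
      (Fintype.card F : ℂ) • (Theta F n (LinearMap.ker f) χ (Submodule.span F {u₀})).mulVec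
        ((LtwoRel F n x N).mulVec v) := by
  rw [LtwoT_eq_twistedLowering, LtwoRel_eq_relLowering,
    twistedLowering_mulVec_Theta hu hχ hN hx]

theorem RoneT_mulVec_Theta (hu : f u₀ = 1) (hχ : χ ≠ 1) (hN : IsCharKernel χ N)
    (hx : x ≤ LinearMap.ker f) (v : Submodule F (Fin n → F) → ℂ) :
    (RoneT F n x (LinearMap.ker f)).mulVec
        ((Theta F n (LinearMap.ker f) χ (Submodule.span F {u₀})).mulVec v) =
      (Theta F n (LinearMap.ker f) χ (Submodule.span F {u₀})).mulVec
        ((RoneRel F n x N).mulVec v) := by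
  rw [RoneT_eq_transpose, RoneRel_eq_transpose,
    transpose_twistedLowering_mulVec_Theta hu hχ hN hx]

theorem RtwoT_mulVec_Theta (hu : f u₀ = 1) (hχ : χ ≠ 1) (hN : IsCharKernel χ N)
    (hx : x ≤ LinearMap.ker f) (v : Submodule F (Fin n → F) → ℂ) :
    (RtwoT F n x (LinearMap.ker f)).mulVec
        ((Theta F n (LinearMap.ker f) χ (Submodule.span F {u₀})).mulVec v) =
      (Theta F n (LinearMap.ker f) χ (Submodule.span F {u₀})).mulVec
        ((RtwoRel F n x N).mulVec v) := by
  rw [RtwoT_eq_transpose, RtwoRel_eq_transpose,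
    transpose_twistedLowering_mulVec_Theta hu hχ hN hx]

end Relations

section DimensionComponents

variable {F : Type} [Field F] {n : ℕ} {x H y : Submodule F (Fin n → F)} {i j k : ℤ}

theorem le_of_PtMem_zero (h : PtMem F n x H i j 0 y) : y ≤ H :=
  inf_eq_right.1 (Submodule.eq_of_le_of_finrank_eq inf_le_right (by
    have := h.2.1; have := h.2.2; omega))

theorem PtMem_sup_one_iff {u : Submodule F (Fin n → F)} (h : IsCompl H u) (hu : finrank F u = 1)
    (hx : x ≤ H) (hy : y ≤ H) : PtMem F n x H i j 1 (y ⊔ u) ↔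
      (finrank F ↥(x ⊓ y) : ℤ) = i ∧ (finrank F y : ℤ) = i + j := by
  rw [PtMem, finrank_inf_sup_of_isCompl h hx hy, inf_sup_eq_of_isCompl h hy,
    finrank_sup_of_isCompl h hy, hu]
  omega

theorem isSmapInvariant_EstarT (hx : x ≤ H) : IsSmapInvariant H (EstarT F n x H i j k) := by
  classical
  intro g y z
  simp only [EstarT, Matrix.diagonal_apply, PtMem, finrank_smap,
    finrank_inf_smap g hx, finrank_inf_smap g le_rfl]
  simp only [smap_eq_orderIso, EmbeddingLike.apply_eq_iff_eq]
  congr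

theorem EstarRel_eq_zero (hx : x ≤ H) (hj : (finrank F H : ℤ) < finrank F x + j) :
    EstarRel F n x H i j = 0 := by
  rw [EstarRel, Matrix.diagonal_eq_zero]
  ext y
  refine if_neg fun ⟨hy, _, _⟩ => ?_
  have hsup := Submodule.finrank_mono (sup_le hx hy)
  have := Submodule.finrank_sup_add_finrank_inf_eq x y
  omega

variable [Fintype (Submodule F (Fin n → F))]

open Classical in
theorem EstarT_mulVec_apply (w : Submodule F (Fin n → F) → ℂ) :
    (EstarT F n x H i j k).mulVec w y = if PtMem F n x H i j k y then w y else 0 := by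
  rw [EstarT, Matrix.mulVec_diagonal, ite_mul, one_mul, zero_mul]

open Classical in
theorem EstarRel_mulVec_apply (hy : y ≤ H) (w : Submodule F (Fin n → F) → ℂ) :
    (EstarRel F n x H i j).mulVec w y =
      if (finrank F ↥(x ⊓ y) : ℤ) = i ∧ (finrank F y : ℤ) = i + j then w y else 0 := by
  rw [EstarRel, Matrix.mulVec_diagonal]
  simp only [hy, true_and, ite_mul, one_mul, zero_mul]

theorem EstarT_zero_mulVec_eq_zero {χ : Gsub F n H →* ℂ} (hχ : χ ≠ 1)
    {m : Submodule F (Fin n → F) → ℂ} (hm : m ∈ Mcomp F n H χ Set.univ) :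
    (EstarT F n x H i j 0).mulVec m = 0 := by
  classical
  ext y
  rw [EstarT_mulVec_apply]
  exact ite_eq_right_iff.2 fun hy => apply_eq_zero_of_le hχ hm (le_of_PtMem_zero hy)

theorem EstarT_one_mulVec_Theta [Fintype F] {f : Dual F (Fin n → F)} {u₀ : Fin n → F}
    [Fintype (Gsub F n (LinearMap.ker f))] {χ : Gsub F n (LinearMap.ker f) →* ℂ}
    {N : Submodule F (Fin n → F)} (hu : f u₀ = 1) (hχ : χ ≠ 1) (hN : IsCharKernel χ N)
    (hx : x ≤ LinearMap.ker f) (i j : ℤ) (v : Submodule F (Fin n → F) → ℂ) :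
    (EstarT F n x (LinearMap.ker f) i j 1).mulVec
        ((Theta F n (LinearMap.ker f) χ (Submodule.span F {u₀})).mulVec v) =
      (Theta F n (LinearMap.ker f) χ (Submodule.span F {u₀})).mulVec
        ((EstarRel F n x N i j).mulVec v) := by
  classical
  have hu0 : u₀ ≠ 0 := by rintro rfl; simp at hu
  have hΘ (w) : (Theta F n _ χ (Submodule.span F {u₀})).mulVec w ∈ Mcomp F n _ χ Set.univ :=
    Theta_mulVec_mem_Mcomp_univ hu w
  refine Mcomp_univ_ext hu hχ hN ((isSmapInvariant_EstarT hx).mulVec_mem_Mcomp_univ (hΘ v))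
    (hΘ _) fun y hy => ?_
  have hcompl : IsCompl (LinearMap.ker f) (Submodule.span F {u₀}) :=
    isCompl_ker_span_singleton (by simp [hu])
  have hmem := PtMem_sup_one_iff (i := i) (j := j) hcompl (finrank_span_singleton hu0) hx
    (hy.trans hN.le)
  rw [EstarT_mulVec_apply, Theta_mulVec_sup hu hN hy, Theta_mulVec_sup hu hN hy,
    EstarRel_mulVec_apply hy, mul_ite, mul_zero, if_congr hmem rfl rfl]

theorem EstarT_one_mulVec_Theta_eq_zero [Fintype F] {f : Dual F (Fin n → F)} {u₀ : Fin n → F}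
    [Fintype (Gsub F n (LinearMap.ker f))] {χ : Gsub F n (LinearMap.ker f) →* ℂ}
    {N : Submodule F (Fin n → F)} (hu : f u₀ = 1) (hχ : χ ≠ 1) (hN : IsCharKernel χ N)
    (hx : x ≤ N) (i : ℤ) (hj : (finrank F N : ℤ) < finrank F x + j)
    (v : Submodule F (Fin n → F) → ℂ) :
    (EstarT F n x (LinearMap.ker f) i j 1).mulVec
      ((Theta F n (LinearMap.ker f) χ (Submodule.span F {u₀})).mulVec v) = 0 := by
  rw [EstarT_one_mulVec_Theta hu hχ hN (hx.trans hN.le), EstarRel_eq_zero hx hj,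
    Matrix.zero_mulVec, Matrix.mulVec_zero]

end DimensionComponents

open Classical in
/-- for a character `χ ≠ 1_G` with `χ|_K = 1_K` there is a
unique `H_χ ∈ P̃_{a,b-1,0}` supporting `Θ_χ`; moreover `Θ_χ` maps
`ℂP(x,H_χ)` bijectively onto `M(χ)` and the stated commutation identities
hold on `ℂP(x,H_χ)`. -/
theorem Theta_iso_K_trivial (F : Type) [Field F] [Fintype F] (a b : ℕ)
    (x H : Submodule F (Fin (a + b + 1) → F))
    (hx : finrank F x = a) (hH : finrank F H = a + b) (hxH : x ≤ H)
    [Fintype (Gsub F (a + b + 1) H)]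
    (u : Submodule F (Fin (a + b + 1) → F))
    (hu : finrank F ↥(x ⊓ u) = 0 ∧ finrank F ↥(H ⊓ u) = 0 ∧ finrank F u = 1)
    (χ : Gsub F (a + b + 1) H →* ℂ) (hχ1 : χ ≠ 1)
    (hχK : ∀ g : Gsub F (a + b + 1) H, memK F (a + b + 1) x g → χ g = 1) :
    (∃! Hχ : Submodule F (Fin (a + b + 1) → F),
      PtMem F (a + b + 1) x H (a : ℤ) ((b : ℤ) - 1) 0 Hχ ∧
      ∀ y : Submodule F (Fin (a + b + 1) → F), y ≤ H →
        (echi F (a + b + 1) H χ (delta F (a + b + 1) (y ⊔ u)) ≠ 0 ↔ y ≤ Hχ))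
    ∧ ∀ Hχ : Submodule F (Fin (a + b + 1) → F),
        PtMem F (a + b + 1) x H (a : ℤ) ((b : ℤ) - 1) 0 Hχ →
        (∀ y : Submodule F (Fin (a + b + 1) → F), y ≤ H →
          (echi F (a + b + 1) H χ (delta F (a + b + 1) (y ⊔ u)) ≠ 0 ↔ y ≤ Hχ)) →
        ((∀ v w : Submodule F (Fin (a + b + 1) → F) → ℂ,
            (∀ y, ¬y ≤ Hχ → v y = 0) → (∀ y, ¬y ≤ Hχ → w y = 0) →
            (Theta F (a + b + 1) H χ u).mulVec v = (Theta F (a + b + 1) H χ u).mulVec w →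
            v = w)
        ∧ (∀ v : Submodule F (Fin (a + b + 1) → F) → ℂ, (∀ y, ¬y ≤ Hχ → v y = 0) →
            (Theta F (a + b + 1) H χ u).mulVec v ∈ Mcomp F (a + b + 1) H χ {y | ¬y ≤ H})
        ∧ (∀ m ∈ Mcomp F (a + b + 1) H χ {y | ¬y ≤ H},
            ∃ v : Submodule F (Fin (a + b + 1) → F) → ℂ,
              (∀ y, ¬y ≤ Hχ → v y = 0) ∧ (Theta F (a + b + 1) H χ u).mulVec v = m)
        ∧ ∀ v : Submodule F (Fin (a + b + 1) → F) → ℂ, (∀ y, ¬y ≤ Hχ → v y = 0) →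
            ((LoneT F (a + b + 1) x H).mulVec ((Theta F (a + b + 1) H χ u).mulVec v)
                = (Fintype.card F : ℂ) •
                    (Theta F (a + b + 1) H χ u).mulVec ((LoneRel F (a + b + 1) x Hχ).mulVec v))
            ∧ ((LtwoT F (a + b + 1) x H).mulVec ((Theta F (a + b + 1) H χ u).mulVec v)
                = (Fintype.card F : ℂ) •
                    (Theta F (a + b + 1) H χ u).mulVec ((LtwoRel F (a + b + 1) x Hχ).mulVec v))
            ∧ ((LthreeT F (a + b + 1) x H).mulVec ((Theta F (a + b + 1) H χ u).mulVec v) = 0)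
            ∧ ((RoneT F (a + b + 1) x H).mulVec ((Theta F (a + b + 1) H χ u).mulVec v)
                = (Theta F (a + b + 1) H χ u).mulVec ((RoneRel F (a + b + 1) x Hχ).mulVec v))
            ∧ ((RtwoT F (a + b + 1) x H).mulVec ((Theta F (a + b + 1) H χ u).mulVec v)
                = (Theta F (a + b + 1) H χ u).mulVec ((RtwoRel F (a + b + 1) x Hχ).mulVec v))
            ∧ ((RthreeT F (a + b + 1) x H).mulVec ((Theta F (a + b + 1) H χ u).mulVec v) = 0)
            ∧ (∀ i j : ℕ, i ≤ a → j < b →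
                (EstarT F (a + b + 1) x H i j 0).mulVec
                    ((Theta F (a + b + 1) H χ u).mulVec v) = 0)
            ∧ (∀ i : ℕ, i ≤ a →
                (EstarT F (a + b + 1) x H i b 0).mulVec
                    ((Theta F (a + b + 1) H χ u).mulVec v) = 0)
            ∧ (∀ i : ℕ, i ≤ a →
                (EstarT F (a + b + 1) x H i b 1).mulVec
                    ((Theta F (a + b + 1) H χ u).mulVec v) = 0)
            ∧ (∀ i j : ℕ, i ≤ a → j < b →
                (EstarT F (a + b + 1) x H i j 1).mulVec
                    ((Theta F (a + b + 1) H χ u).mulVec v)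
                  = (Theta F (a + b + 1) H χ u).mulVec
                      ((EstarRel F (a + b + 1) x Hχ i j).mulVec v))) := by
  obtain ⟨u₀, hu₀, rfl⟩ := exists_notMem_eq_span_singleton
    (disjoint_iff.2 (Submodule.finrank_eq_zero.1 hu.2.1)) hu.2.2
  obtain ⟨f, rfl, hf⟩ := exists_dual_ker_eq (by simp [hH]) hu₀
  obtain ⟨N, hN, hdim⟩ := exists_isCharKernel hf hχ1
  have hcoatom := isCoatom_ker_of_ne_zero (f := f) (by rintro rfl; simp at hf)
  have hxN : x ≤ N := (hN.le_iff x hxH).2 hχK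
  have hΘ (v) := Theta_mulVec_mem_Mcomp_univ (χ := χ) hf v
  have huniq {N'} (hmem) := eq_charKernel_of_forall_echi_ne_zero_iff hf hχ1 hN (N' := N')
    (le_of_PtMem_zero (i := a) (j := b - 1) (x := x) hmem)
  refine ⟨⟨N, ⟨?_, fun y hy => echi_delta_sup_ne_zero_iff hf hχ1 hN hy⟩,
    fun N' h => huniq h.1 h.2⟩, fun N' hmem h => ?_⟩
  · rw [PtMem, inf_eq_left.2 hxN, inf_eq_right.2 hN.le]
    omega
  rw [huniq hmem h, ← Mcomp_univ_eq hχ1]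
  exact ⟨fun v w => eq_of_Theta_mulVec_eq hf hχ1 hN, fun v _ => hΘ v,
    fun m => exists_Theta_mulVec_eq hf hχ1 hN, fun v _ =>
    ⟨LoneT_mulVec_Theta hf hχ1 hN hxH v, LtwoT_mulVec_Theta hf hχ1 hN hxH v,
      LthreeT_mulVec_eq_zero hcoatom hxH hχ1 (hΘ v), RoneT_mulVec_Theta hf hχ1 hN hxH v,
      RtwoT_mulVec_Theta hf hχ1 hN hxH v, RthreeT_mulVec_eq_zero hcoatom hχ1 (hΘ v),
      fun i j _ _ => EstarT_zero_mulVec_eq_zero hχ1 (hΘ v),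
      fun i _ => EstarT_zero_mulVec_eq_zero hχ1 (hΘ v),
      fun i _ => EstarT_one_mulVec_Theta_eq_zero hf hχ1 hN hxN i (by omega) v,
      fun i j _ _ => EstarT_one_mulVec_Theta hf hχ1 hN hxH i j v⟩⟩
end

section
/- Let (h, r, s, λ₀) be admissible parameters. Then the characteristic polynomial of A(q,d;h,r,s,λ₀) equals ∏_{i=0}^{d} (X − λ_i), where λ_i = λ₀ + h(1−q^i)(1−sq^{i+1})q^{−i} for 0 ≤ i ≤ d; that is, the eigenvalues of A(q,d;h,r,s,λ₀) are λ₀, λ₁, …, λ_d. In particular, for fixed h, s, λ₀, the matrices A(q,d;h,r,s,λ₀) for distinct admissible values of r are all similar. -/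
/-- The off-diagonal entry `b_i = h(1-q^{i-d})(1-rq^{i+1})`. -/
noncomputable def bEnt (q : ℂ) (d : ℕ) (h r : ℂ) (i : ℕ) : ℂ :=
  h * (1 - q ^ ((i : ℤ) - (d : ℤ))) * (1 - r * q ^ (i + 1))

/-- The off-diagonal entry `c_i = hsq(1-q^i)(1-rq^{i-d-1}/s)`. -/
noncomputable def cEnt (q : ℂ) (d : ℕ) (h r s : ℂ) (i : ℕ) : ℂ :=
  h * s * q * (1 - q ^ i) * (1 - r * q ^ ((i : ℤ) - (d : ℤ) - 1) / s)

/-- The `(d+1) × (d+1)` tridiagonal matrix `A(q,d;h,r,s,λ₀)`: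
superdiagonal entries `b_i`, subdiagonal entries `c_i`, and diagonal entries
`a_i = λ₀ - b_i - c_i`. -/
noncomputable def stdMat (q : ℂ) (d : ℕ) (h r s lam0 : ℂ) :
    Matrix (Fin (d + 1)) (Fin (d + 1)) ℂ := fun i j =>
  if (j : ℕ) = (i : ℕ) + 1 then bEnt q d h r i
  else if (i : ℕ) = (j : ℕ) + 1 then cEnt q d h r s i
  else if i = j then lam0 - bEnt q d h r i - cEnt q d h r s i
  else 0

/-- Admissibility of the parameters `(h, r, s, λ₀)`:
`h, r, s ≠ 0`, `rq^i ≠ 1` and `sq^i/r ≠ 1` for `1 ≤ i ≤ d`, and `sq^i ≠ 1`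
for `2 ≤ i ≤ 2d`. -/
def Admissible (q : ℂ) (d : ℕ) (h r s : ℂ) : Prop :=
  h ≠ 0 ∧ r ≠ 0 ∧ s ≠ 0 ∧
    (∀ i : ℕ, 1 ≤ i → i ≤ d → r * q ^ i ≠ 1 ∧ s * q ^ i / r ≠ 1) ∧
    (∀ i : ℕ, 2 ≤ i → i ≤ 2 * d → s * q ^ i ≠ 1)


/-!
Let `A` act on functions of the node `x_i = q ^ (-i)`. Moving from `i` to `i ± 1` multiplies `x ^ k`
by `q ^ (∓k)`, and `x ^ 2 * b` and `x ^ 2 * c` are quadratic polynomials in `x`, so `A` maps `x ^ k`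
to a combination of `x ^ k`, `x ^ (k - 1)` and `x ^ (k - 2)` in which `x ^ k` has coefficient `λ_k`.
In the basis of monomials `A` is therefore upper triangular with diagonal `λ_0, …, λ_d`. These
numbers do not involve `r`; as they are distinct, `A` is similar to a diagonal matrix that does not
depend on `r`.
-/

theorem natCast_pow_injective {R : Type*} [Semiring R] [CharZero R] {q : ℕ} (hq : 1 < q) :
    Function.Injective fun n : ℕ => (q : R) ^ n := by
  simpa only [Function.comp_def, Nat.cast_pow] using
    (Nat.cast_injective (R := R)).comp (Nat.pow_right_injective hq)

theorem sum_ite_natCast_eq_mul {R : Type*} [NonUnitalNonAssocSemiring R] {n : ℕ} (m : ℤ) (c : R)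
    (f : ℤ → R) (hm : c ≠ 0 → 0 ≤ m ∧ m < n) :
    ∑ j : Fin n, (if ((j : ℕ) : ℤ) = m then c else 0) * f (j : ℕ) = c * f m := by
  by_cases hc : c = 0
  · simp [hc]
  obtain ⟨h0, hn⟩ := hm hc
  lift m to ℕ using h0
  rw [Finset.sum_eq_single (⟨m, by exact_mod_cast hn⟩ : Fin n)]
  · simp
  · intro j _ hj
    rw [if_neg (fun h => hj (Fin.ext (by exact_mod_cast h))), zero_mul]
  · simp

section Matrices

open Matrix Polynomial

variable {ι R K : Type*} [CommRing R] [Field K]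

theorem charpoly_eq_of_isConj [Fintype ι] [DecidableEq ι] {A B : Matrix ι ι R}
    (hAB : IsConj A B) : A.charpoly = B.charpoly := by
  obtain ⟨u, hu⟩ := hAB
  rw [← charpoly_units_conj u A, hu.eq, ← coe_units_inv, Units.mul_inv_cancel_right]

theorem exists_isUnit_inv_mul_mul_eq_of_isConj [Fintype ι] [DecidableEq ι] {A B : Matrix ι ι R}
    (hAB : IsConj A B) : ∃ S : Matrix ι ι R, IsUnit S ∧ S⁻¹ * A * S = B := by
  obtain ⟨u, hu⟩ := hAB.symm
  refine ⟨u, u.isUnit, ?_⟩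
  rw [mul_assoc, ← hu.eq, ← coe_units_inv, Units.inv_mul_cancel_left]

theorem charpoly_eq_prod_of_mul_vandermonde_eq {n : ℕ} {A : Matrix (Fin n) (Fin n) K}
    {v : Fin n → K} (hv : Function.Injective v) {p : Fin n → K[X]}
    (hp : ∀ k, (p k).natDegree ≤ k)
    (hA : A * vandermonde v = of fun i k => (p k).eval (v i)) :
    A.charpoly = ∏ k, (X - C ((p k).coeff k)) := by
  have hunit : IsUnit (vandermonde v) :=
    (isUnit_iff_isUnit_det _).2 (det_vandermonde_ne_zero_iff.2 hv).isUnit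
  have hconj : IsConj (of fun i k : Fin n => (p k).coeff i) A := by
    refine ⟨hunit.unit, ?_⟩
    rw [SemiconjBy, hunit.unit_spec, hA,
      eval_matrixOfPolynomials_eq_vandermonde_mul_matrixOfPolynomials v p hp]
  rw [← charpoly_eq_of_isConj hconj,
    charpoly_of_isUpperTriangular _ (matrixOfPolynomials_blockTriangular p hp)]
  rfl

theorem exists_hasEigenvector_of_isRoot_charpoly [IsDomain R] [Fintype ι] [DecidableEq ι]
    {A : Matrix ι ι R} {μ : R} (hμ : A.charpoly.IsRoot μ) :
    ∃ v, Module.End.HasEigenvector (toLin' A) μ v := by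
  rw [← charpoly_toLin', ← Module.End.hasEigenvalue_iff_isRoot_charpoly] at hμ
  exact hμ.exists_hasEigenvector

theorem isConj_diagonal_of_charpoly_eq_prod [Fintype ι] [DecidableEq ι] {A : Matrix ι ι K}
    {μ : ι → K} (hμ : Function.Injective μ) (hA : A.charpoly = ∏ i, (X - C (μ i))) :
    IsConj (diagonal μ) A := by
  have hroot (i : ι) : A.charpoly.IsRoot (μ i) := by
    rw [hA, isRoot_prod]
    exact ⟨i, Finset.mem_univ i, by simp⟩
  choose v hv using fun i => exists_hasEigenvector_of_isRoot_charpoly (hroot i)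
  have hunit : IsUnit (of v)ᵀ :=
    linearIndependent_cols_iff_isUnit.1 (Module.End.eigenvectors_linearIndependent' _ μ hμ v hv)
  refine ⟨hunit.unit, ?_⟩
  ext i k
  have hik : (A *ᵥ v k) i = μ k * v k i := congrFun (hv k).apply_eq_smul i
  rw [hunit.unit_spec, mul_diagonal, transpose_apply, of_apply, mul_comm, ← hik]
  rfl

end Matrices

section StdMat

open Polynomial
open Matrix (diagonal vandermonde)

variable {q : ℂ} {d : ℕ} {h s : ℂ} (r lam0 : ℂ)

theorem stdMat_apply_eq_add (i j : Fin (d + 1)) :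
    stdMat q d h r s lam0 i j =
      (if ((j : ℕ) : ℤ) = (i : ℕ) + 1 then bEnt q d h r i else 0)
      + (if ((j : ℕ) : ℤ) = (i : ℕ) - 1 then cEnt q d h r s i else 0)
      + (if ((j : ℕ) : ℤ) = (i : ℕ) then lam0 - bEnt q d h r i - cEnt q d h r s i else 0) := by
  unfold stdMat
  simp only [Fin.ext_iff]
  split_ifs <;> first | omega | ring

-- Since `b_d = c_0 = 0`, the values of `f` at `d + 1` and `-1` never contribute.
theorem sum_stdMat_mul (f : ℤ → ℂ) (i : Fin (d + 1)) :
    ∑ j, stdMat q d h r s lam0 i j * f (j : ℕ) =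
      lam0 * f (i : ℕ) + bEnt q d h r i * (f ((i : ℕ) + 1) - f (i : ℕ))
        + cEnt q d h r s i * (f ((i : ℕ) - 1) - f (i : ℕ)) := by
  have hb : bEnt q d h r i ≠ 0 → (i : ℕ) ≠ d := by
    intro hb hi
    simp [bEnt, hi] at hb
  have hc : cEnt q d h r s i ≠ 0 → (i : ℕ) ≠ 0 := by
    intro hc hi
    simp [cEnt, hi] at hc
  simp only [stdMat_apply_eq_add, add_mul, Finset.sum_add_distrib]
  rw [sum_ite_natCast_eq_mul _ _ f fun hne => by have := hb hne; omega,
    sum_ite_natCast_eq_mul _ _ f fun hne => by have := hc hne; omega,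
    sum_ite_natCast_eq_mul _ _ f fun _ => by omega]
  ring

theorem bEnt_eq_zpow_neg (hq : q ≠ 0) (i : ℕ) :
    bEnt q d h r i =
      h * (1 - q ^ (-d : ℤ) / q ^ (-i : ℤ)) * (1 - r * q / q ^ (-i : ℤ)) := by
  rw [bEnt, zpow_sub₀ hq]
  simp only [zpow_neg, zpow_natCast, pow_succ]
  field_simp

theorem cEnt_eq_zpow_neg (hq : q ≠ 0) (hs : s ≠ 0) (i : ℕ) :
    cEnt q d h r s i =
      h * (1 - 1 / q ^ (-i : ℤ)) * (s * q - r * q ^ (-d : ℤ) / q ^ (-i : ℤ)) := by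
  rw [cEnt, zpow_sub₀ hq, zpow_sub₀ hq]
  simp only [zpow_neg, zpow_natCast, zpow_one]
  field_simp

/-- The eigenvalue `λ_k` of `A(q,d;h,r,s,λ₀)`, for every `r`. -/
noncomputable def stdEigenvalue (q h s lam0 : ℂ) (k : ℕ) : ℂ :=
  lam0 + h * (1 - q ^ k) * (1 - s * q ^ (k + 1)) * q ^ (-(k : ℤ))

theorem stdEigenvalue_sub_stdEigenvalue (hq : q ≠ 0) (i j : ℕ) :
    stdEigenvalue q h s lam0 i - stdEigenvalue q h s lam0 j =
      h * (q ^ (-i : ℤ) - q ^ (-j : ℤ)) * (1 - s * q ^ (i + j + 1)) := by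
  simp only [stdEigenvalue, zpow_neg, zpow_natCast, pow_succ, pow_add]
  field_simp
  ring

theorem stdEigenvalue_injective (hq : q ≠ 0)
    (hinj : Function.Injective fun i : Fin (d + 1) => q ^ (i : ℕ)) (hh : h ≠ 0)
    (hsq : ∀ i : ℕ, 2 ≤ i → i ≤ 2 * d → s * q ^ i ≠ 1) :
    Function.Injective fun i : Fin (d + 1) => stdEigenvalue q h s lam0 i := by
  intro i j hij
  by_contra hne
  have hpow : q ^ (-(i : ℕ) : ℤ) - q ^ (-(j : ℕ) : ℤ) ≠ 0 := by
    simp only [zpow_neg, zpow_natCast]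
    exact sub_ne_zero.2 fun heq => hne (hinj (inv_injective heq))
  have hfactor : 1 - s * q ^ ((i : ℕ) + j + 1) ≠ 0 :=
    sub_ne_zero.2 (hsq _ (by omega) (by omega)).symm
  refine mul_ne_zero (mul_ne_zero hh hpow) hfactor ?_
  rw [← stdEigenvalue_sub_stdEigenvalue lam0 hq]
  exact sub_eq_zero.2 hij

/-- The coefficient of `x ^ (k - 1)` in the image of `x ^ k` under `A(q,d;h,r,s,λ₀)`, acting on
functions of the nodes `x = q ^ (-i)`. It is read off from `x ^ 2 * b = h (x - q ^ (-d)) (x - r q)`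
and `x ^ 2 * c = h (x - 1) (s q x - r q ^ (-d))`. -/
noncomputable def firstLowerCoeff (q : ℂ) (d : ℕ) (h r s : ℂ) (k : ℕ) : ℂ :=
  -h * ((q ^ (-d : ℤ) + r * q) * ((q ^ k)⁻¹ - 1) + (s * q + r * q ^ (-d : ℤ)) * (q ^ k - 1))

/-- The coefficient of `x ^ (k - 2)` in the image of `x ^ k` under `A(q,d;h,r,s,λ₀)`, acting on
functions of the nodes `x = q ^ (-i)`. -/
noncomputable def secondLowerCoeff (q : ℂ) (d : ℕ) (h r : ℂ) (k : ℕ) : ℂ :=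
  h * r * q ^ (-d : ℤ) * (q * ((q ^ k)⁻¹ - 1) + (q ^ k - 1))

theorem firstLowerCoeff_zero : firstLowerCoeff q d h r s 0 = 0 := by
  simp [firstLowerCoeff]

theorem secondLowerCoeff_zero : secondLowerCoeff q d h r 0 = 0 := by
  simp [secondLowerCoeff]

theorem secondLowerCoeff_one (hq : q ≠ 0) : secondLowerCoeff q d h r 1 = 0 := by
  simp only [secondLowerCoeff, pow_one]
  field_simp
  ring

/-- The image of `x ^ k` under `A(q,d;h,r,s,λ₀)`, as a polynomial in the node `x = q ^ (-i)`. The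
exponents are truncated, but the terms in which this happens have coefficient `0`. -/
noncomputable def monomialImage (q : ℂ) (d : ℕ) (h r s lam0 : ℂ) (k : ℕ) : ℂ[X] :=
  C (stdEigenvalue q h s lam0 k) * X ^ k + C (firstLowerCoeff q d h r s k) * X ^ (k - 1)
    + C (secondLowerCoeff q d h r k) * X ^ (k - 2)

theorem natDegree_monomialImage_le (k : ℕ) :
    (monomialImage q d h r s lam0 k).natDegree ≤ k := by
  unfold monomialImage
  compute_degree

theorem coeff_monomialImage_self (hq : q ≠ 0) (k : ℕ) :
    (monomialImage q d h r s lam0 k).coeff k = stdEigenvalue q h s lam0 k := by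
  rcases k with _ | _ | k
  · simp [monomialImage, firstLowerCoeff_zero, secondLowerCoeff_zero]
  · simp [monomialImage, secondLowerCoeff_one r hq]
  · have hk : ¬k + 1 + 1 = k := by omega
    simp [monomialImage, coeff_X_pow, hk]

theorem eval_monomialImage (hq : q ≠ 0) (k : ℕ) {x : ℂ} (hx : x ≠ 0) :
    (monomialImage q d h r s lam0 k).eval x =
      x ^ k * (stdEigenvalue q h s lam0 k + firstLowerCoeff q d h r s k / x
        + secondLowerCoeff q d h r k / x ^ 2) := by
  rcases k with _ | _ | k
  · simp [monomialImage, firstLowerCoeff_zero, secondLowerCoeff_zero]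
  · simp only [monomialImage, zero_add, pow_one, tsub_self, pow_zero, mul_one,
      secondLowerCoeff_one r hq, C_0, zero_mul, add_zero, eval_add, eval_mul, eval_C, eval_X,
      zero_div]
    field_simp
  · simp only [monomialImage, add_tsub_cancel_right, Nat.reduceSubDiff, eval_add, eval_mul, eval_C,
      eval_pow, eval_X]
    field_simp
    ring

theorem stdMat_mul_vandermonde (hq : q ≠ 0) (hs : s ≠ 0) :
    stdMat q d h r s lam0 * vandermonde (fun i : Fin (d + 1) => q ^ (-(i : ℕ) : ℤ)) =
      Matrix.of fun i k : Fin (d + 1) =>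
        (monomialImage q d h r s lam0 k).eval (q ^ (-(i : ℕ) : ℤ)) := by
  ext i k
  set x : ℂ := q ^ (-(i : ℕ) : ℤ) with hx_def
  have hx : x ≠ 0 := zpow_ne_zero _ hq
  have hsucc : (q ^ (-((i : ℕ) + 1) : ℤ)) ^ (k : ℕ) = x ^ (k : ℕ) * (q ^ (k : ℕ))⁻¹ := by
    rw [neg_add, zpow_add₀ hq, mul_pow, zpow_neg_one, inv_pow]
  have hpred : (q ^ (-((i : ℕ) - 1) : ℤ)) ^ (k : ℕ) = x ^ (k : ℕ) * q ^ (k : ℕ) := by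
    rw [neg_sub', zpow_sub₀ hq, zpow_neg_one, div_inv_eq_mul, mul_pow]
  rw [Matrix.mul_apply, Matrix.of_apply, eval_monomialImage r lam0 hq k hx]
  simp only [Matrix.vandermonde_apply]
  rw [sum_stdMat_mul r lam0 (fun z => (q ^ (-z)) ^ (k : ℕ)) i, hsucc, hpred,
    bEnt_eq_zpow_neg r hq, cEnt_eq_zpow_neg r hq hs, ← hx_def]
  simp only [stdEigenvalue, firstLowerCoeff, secondLowerCoeff, zpow_neg q k, zpow_natCast, pow_succ]
  field_simp
  ring

theorem charpoly_stdMat_eq_prod (hq : q ≠ 0)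
    (hinj : Function.Injective fun i : Fin (d + 1) => q ^ (i : ℕ)) (hs : s ≠ 0) :
    (stdMat q d h r s lam0).charpoly = ∏ i : Fin (d + 1), (X - C (stdEigenvalue q h s lam0 i)) := by
  have hnodes : Function.Injective fun i : Fin (d + 1) => q ^ (-(i : ℕ) : ℤ) := by
    simp only [zpow_neg, zpow_natCast]
    exact inv_injective.comp hinj
  rw [charpoly_eq_prod_of_mul_vandermonde_eq hnodes
    (fun k => natDegree_monomialImage_le r lam0 k) (stdMat_mul_vandermonde r lam0 hq hs)]
  simp only [coeff_monomialImage_self r lam0 hq]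

theorem isConj_diagonal_stdMat (hq : q ≠ 0)
    (hinj : Function.Injective fun i : Fin (d + 1) => q ^ (i : ℕ)) (hh : h ≠ 0) (hs : s ≠ 0)
    (hsq : ∀ i : ℕ, 2 ≤ i → i ≤ 2 * d → s * q ^ i ≠ 1) :
    IsConj (diagonal fun i : Fin (d + 1) => stdEigenvalue q h s lam0 i)
      (stdMat q d h r s lam0) :=
  isConj_diagonal_of_charpoly_eq_prod (stdEigenvalue_injective lam0 hq hinj hh hsq)
    (charpoly_stdMat_eq_prod r lam0 hq hinj hs)

end StdMat

open Polynomial in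
theorem charpoly_stdMat_general (q : ℂ) (hq : q ≠ 0) (d : ℕ)
    (hinj : Function.Injective fun i : Fin (d + 1) => q ^ (i : ℕ)) (h r s lam0 : ℂ)
    (hh : h ≠ 0) (hs : s ≠ 0) (hsq : ∀ i : ℕ, 2 ≤ i → i ≤ 2 * d → s * q ^ i ≠ 1) :
    (stdMat q d h r s lam0).charpoly
        = ∏ i ∈ Finset.range (d + 1), (X - C (stdEigenvalue q h s lam0 i))
      ∧ ∀ r' : ℂ, ∃ S : Matrix (Fin (d + 1)) (Fin (d + 1)) ℂ, IsUnit S ∧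
          S⁻¹ * stdMat q d h r s lam0 * S = stdMat q d h r' s lam0 := by
  constructor
  · rw [charpoly_stdMat_eq_prod r lam0 hq hinj hs,
      Fin.prod_univ_eq_prod_range fun i => X - C (stdEigenvalue q h s lam0 i)]
  · intro r'
    exact exists_isUnit_inv_mul_mul_eq_of_isConj <|
      (isConj_diagonal_stdMat r lam0 hq hinj hh hs hsq).symm.trans
        (isConj_diagonal_stdMat r' lam0 hq hinj hh hs hsq)

open Polynomial in
/-- the characteristic polynomial of `A(q,d;h,r,s,λ₀)` is
`∏_{i=0}^{d} (X - λ_i)` with `λ_i = λ₀ + h(1-q^i)(1-sq^{i+1})q^{-i}`; in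
particular, for fixed `h, s, λ₀` the matrices for distinct admissible values
of `r` are all similar. -/
theorem charpoly_stdMat (q : ℕ) (hq : IsPrimePow q) (d : ℕ) (h r s lam0 : ℂ)
    (hadm : Admissible (q : ℂ) d h r s) :
    (stdMat (q : ℂ) d h r s lam0).charpoly
        = ∏ i ∈ Finset.range (d + 1),
            (X - C (lam0 + h * (1 - (q : ℂ) ^ i) * (1 - s * (q : ℂ) ^ (i + 1))
              * (q : ℂ) ^ (-(i : ℤ))))
      ∧ ∀ r' : ℂ, Admissible (q : ℂ) d h r' s →
          ∃ S : Matrix (Fin (d + 1)) (Fin (d + 1)) ℂ, IsUnit S ∧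
            S⁻¹ * stdMat (q : ℂ) d h r s lam0 * S = stdMat (q : ℂ) d h r' s lam0 := by
  obtain ⟨hh, -, hs, -, hsq⟩ := hadm
  have hq0 : (q : ℂ) ≠ 0 := Nat.cast_ne_zero.2 hq.ne_zero
  have hinj := (natCast_pow_injective (R := ℂ) hq.one_lt).comp (Fin.val_injective (n := d + 1))
  have ⟨hchar, hsim⟩ := charpoly_stdMat_general q hq0 d hinj h r s lam0 hh hs hsq
  exact ⟨hchar, fun r' _ => hsim r'⟩
end
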